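/- arXiv:math-ph/0506042 — 3 statements merged into one kernel-verified Lean document; each statement's English description precedes it below -/
import Mathlib

section
/- Fix ν ∈ ℝ and define on D = {0 < β³ < β² < β¹}: Q(λ) = (β¹−λ)(λ−β²)(λ−β³), 𝒥_k = 2∫_{β²}^{β¹} λ^k Q^{−1/2} dλ for k ∈ {−1, 0, 1}, α₁ = −𝒥₁/𝒥₀, α₀ = −𝒥_{−1}/𝒥₀, v^i(β) = (2/√(β¹β²β³))(1 − ∏_{j≠i}(β^i−β^j)/(β^i(β^i+α₁))), ℋ₀(β) = −√(β¹β²β³) α₀(β), and 𝒩(β) = 1/β¹ + 1/β² + 1/β³ − ν + 2α₀(β). Then ℋ₀ and 𝒩 are differentiable on D and for each i = 1, 2, 3: ∂𝒩/∂β^i + v^i(β) · ∂ℋ₀/∂β^i = 0. Consequently, along any C¹ solution β(y,τ) of the Whitham equations ∂_τβ^i + v^i(β)∂_yβ^i = 0 one has ∂_τ(ℋ₀∘β) = ∂_y(𝒩∘β), i.e. the one-form ℋ₀ dy + 𝒩 dτ is closed, so dx = ℋ₀ dy + 𝒩 dτ, dt = dτ defines a reciprocal transformation for the averaged negative KdV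 flow. -/
/-!
The substitution `λ = b₁ sin²θ + b₂ cos²θ` turns the periods `𝒥_k` into four times
`I_k = ∫₀^{π/2} λ^k (λ − b₃)^{-1/2} dθ`, whose integrands are smooth on the closed interval, so
they may be differentiated under the integral sign (`hasDerivAt_param`).  Modulo the exact forms
`d(sin θ cos θ (λ − b₃)^{-1/2})` and `d(sin θ cos θ λ⁻¹ (λ − b₃)^{-1/2})`, which integrate to zero
(`integral_exact0`, `integral_exactm`), the derivatives reduce to the periods themselves:

* `∂ᵢ I₀ = (I₁ − bᵢ I₀) / (2 pᵢ) = I₀ eᵢ`, where `pᵢ = ∏_{j ≠ i} (bᵢ − bⱼ)` and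
  `eᵢ = −(bᵢ + α₁) / (2 pᵢ)`;
* `∂ᵢ I₋₁ = (∂ᵢ I₀ − I₋₁ / 2) / bᵢ`.

Hence `∂ᵢ ℋ₀ = √(b₁b₂b₃) eᵢ (1/bᵢ + α₀)` and `∂ᵢ 𝒩 = −(1/bᵢ + α₀)(1/bᵢ + 2eᵢ)`.  Since
`vⁱ = (2/√(b₁b₂b₃)) (1 + 1/(2 eᵢ bᵢ))`, the relation `∂ᵢ 𝒩 + vⁱ ∂ᵢ ℋ₀ = 0` is an identity; the
denominators `bᵢ + α₁` do not vanish because `−α₁` is a weighted mean of `λ` over `(b₂, b₁)`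
(`I1_bounds`).

All derivatives are computed along an arbitrary `C¹` curve `t ↦ (β₁, β₂, β₃)(t)`.  Coordinate lines
give the partial derivatives, and the `y`- and `τ`-lines of a solution give its conservation law.
-/
open Real Set Filter Topology MeasureTheory

namespace NegKdV

/-! ### Trigonometric form of the periods -/

/-- The trigonometric substitution `λ = b₁ sin²θ + b₂ cos²θ`. -/
noncomputable def lam (b1 b2 θ : ℝ) : ℝ := b1 * sin θ ^ 2 + b2 * cos θ ^ 2

/-- `√(λ − b₃)` in the trigonometric variable. -/
noncomputable def rt (b1 b2 b3 θ : ℝ) : ℝ := √(lam b1 b2 θ - b3)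

/-- A quarter of the period `𝒥₀`, in the variable `θ`. -/
noncomputable def I0 (b1 b2 b3 : ℝ) : ℝ := ∫ θ in (0 : ℝ)..π / 2, 1 / rt b1 b2 b3 θ
/-- A quarter of the period `𝒥₁`, in the variable `θ`. -/
noncomputable def I1 (b1 b2 b3 : ℝ) : ℝ :=
  ∫ θ in (0 : ℝ)..π / 2, lam b1 b2 θ / rt b1 b2 b3 θ
/-- A quarter of the period `𝒥₋₁`, in the variable `θ`. -/
noncomputable def Im (b1 b2 b3 : ℝ) : ℝ :=
  ∫ θ in (0 : ℝ)..π / 2, 1 / (lam b1 b2 θ * rt b1 b2 b3 θ)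

lemma le_lam {b1 b2 : ℝ} (h : b2 < b1) (θ : ℝ) : b2 ≤ lam b1 b2 θ := by
  rw [lam, cos_sq']
  nlinarith [mul_nonneg (sub_nonneg.2 h.le) (sq_nonneg (sin θ))]

lemma rt_pos {b1 b2 b3 : ℝ} (h32 : b3 < b2) (h21 : b2 < b1) (θ : ℝ) : 0 < rt b1 b2 b3 θ :=
  sqrt_pos.2 (by linarith [le_lam h21 θ])

lemma rt_sq {b1 b2 b3 : ℝ} (h32 : b3 < b2) (h21 : b2 < b1) (θ : ℝ) :
    rt b1 b2 b3 θ ^ 2 = lam b1 b2 θ - b3 :=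
  sq_sqrt (by linarith [le_lam h21 θ])

lemma hasDerivAt_lam (b1 b2 θ : ℝ) :
    HasDerivAt (lam b1 b2) (2 * (b1 - b2) * (sin θ * cos θ)) θ := by
  refine ((((hasDerivAt_sin θ).pow 2).const_mul b1).add
    (((hasDerivAt_cos θ).pow 2).const_mul b2)).congr_deriv ?_
  push_cast
  ring

/-- The substitution `λ = b₁ sin²θ + b₂ cos²θ`; for it,
`√((b₁ − λ)(λ − b₂)) = (b₁ − b₂) sin θ cos θ = (dλ/dθ) / 2`. -/
lemma integral_subst {b1 b2 b3 : ℝ} (h32 : b3 < b2) (h21 : b2 < b1) (φ : ℝ → ℝ) :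
    ∫ l in b2..b1, φ l / √((b1 - l) * (l - b2) * (l - b3))
      = 2 * ∫ θ in (0 : ℝ)..π / 2, φ (lam b1 b2 θ) / rt b1 b2 b3 θ := by
  have key := intervalIntegral.integral_comp_mul_deriv_of_deriv_nonneg (a := 0) (b := π / 2)
    (f := lam b1 b2) (f' := fun θ => 2 * (b1 - b2) * (sin θ * cos θ))
    (g := fun l => φ l / √((b1 - l) * (l - b2) * (l - b3)))
    (by unfold lam; fun_prop)
    (fun θ _ => hasDerivAt_lam b1 b2 θ)
    (by
      intro θ hθ
      rw [min_eq_left (by positivity), max_eq_right (by positivity)] at hθ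
      have := sin_pos_of_pos_of_lt_pi hθ.1 (by linarith [hθ.2, pi_pos])
      have := cos_pos_of_mem_Ioo (x := θ) ⟨by linarith [hθ.1, pi_pos], hθ.2⟩
      have : 0 < b1 - b2 := by linarith
      positivity)
  have e0 : lam b1 b2 0 = b2 := by simp [lam]
  have e1 : lam b1 b2 (π / 2) = b1 := by simp [lam]
  rw [e0, e1] at key
  rw [← key, ← intervalIntegral.integral_const_mul]
  -- the two integrands agree off the endpoints
  rw [intervalIntegral.integral_of_le (by positivity), intervalIntegral.integral_of_le (by positivity),
    integral_Ioc_eq_integral_Ioo, integral_Ioc_eq_integral_Ioo]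
  refine setIntegral_congr_fun measurableSet_Ioo fun θ hθ => ?_
  have hs := sin_pos_of_pos_of_lt_pi hθ.1 (by linarith [hθ.2, pi_pos])
  have hc := cos_pos_of_mem_Ioo (x := θ) ⟨by linarith [hθ.1, pi_pos], hθ.2⟩
  have hb : 0 < b1 - b2 := by linarith
  have hq := rt_pos h32 h21 θ
  have hsc := sin_sq_add_cos_sq θ
  have hroot : √((b1 - lam b1 b2 θ) * (lam b1 b2 θ - b2) * (lam b1 b2 θ - b3))
      = (b1 - b2) * (sin θ * cos θ) * rt b1 b2 b3 θ := by
    rw [rt, sqrt_mul']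
    · congr 1
      rw [show (b1 - lam b1 b2 θ) * (lam b1 b2 θ - b2) = ((b1 - b2) * (sin θ * cos θ)) ^ 2 by
        have : cos θ ^ 2 = 1 - sin θ ^ 2 := by linarith
        unfold lam; rw [mul_pow, mul_pow, this]; ring]
      exact sqrt_sq (by positivity)
    · linarith [le_lam h21 θ]
  simp only [Function.comp, hroot]
  field_simp

/-! ### Exact forms and reduction of the differentiated periods -/

lemma continuous_lam (b1 b2 : ℝ) : Continuous (lam b1 b2) := by unfold lam; fun_prop

lemma continuous_rt (b1 b2 b3 : ℝ) : Continuous (rt b1 b2 b3) := by unfold rt lam; fun_prop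

lemma hasDerivAt_rt {b1 b2 b3 : ℝ} (h32 : b3 < b2) (h21 : b2 < b1) (θ : ℝ) :
    HasDerivAt (rt b1 b2 b3) ((b1 - b2) * (sin θ * cos θ) / rt b1 b2 b3 θ) θ := by
  have hq := rt_pos h32 h21 θ
  have h := ((hasDerivAt_lam b1 b2 θ).sub_const b3).sqrt (by linarith [le_lam h21 θ])
  refine h.congr_deriv ?_
  change _ / (2 * rt b1 b2 b3 θ) = _
  field_simp

/-- The integrand is the `θ`-derivative of `sin θ cos θ / √(λ − b₃)`, which vanishes at both ends. -/
lemma integral_exact0 {b1 b2 b3 : ℝ} (h32 : b3 < b2) (h21 : b2 < b1) :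
    ∫ θ in (0 : ℝ)..π / 2, ((cos θ ^ 2 - sin θ ^ 2) / rt b1 b2 b3 θ
      - (b1 - b2) * (sin θ ^ 2 * cos θ ^ 2) / rt b1 b2 b3 θ ^ 3) = 0 := by
  have hne := fun θ => (rt_pos h32 h21 θ).ne'
  have hc := continuous_rt b1 b2 b3
  rw [intervalIntegral.integral_eq_sub_of_hasDerivAt
    (f := fun θ => sin θ * cos θ / rt b1 b2 b3 θ)]
  · simp
  · intro θ _
    have := hne θ
    refine (((hasDerivAt_sin θ).mul (hasDerivAt_cos θ)).div
      (hasDerivAt_rt h32 h21 θ) this).congr_deriv ?_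
    simp only [Pi.mul_apply]
    field_simp
    ring
  · refine Continuous.intervalIntegrable ?_ _ _
    fun_prop (disch := intro θ; first | exact hne θ | exact pow_ne_zero _ (hne θ))

/-- The integrand is the `θ`-derivative of `sin θ cos θ / (λ √(λ − b₃))`, which vanishes at both
ends. -/
lemma integral_exactm {b1 b2 b3 : ℝ} (h3 : 0 < b3) (h32 : b3 < b2) (h21 : b2 < b1) :
    ∫ θ in (0 : ℝ)..π / 2, ((cos θ ^ 2 - sin θ ^ 2) / (lam b1 b2 θ * rt b1 b2 b3 θ)
      - 2 * (b1 - b2) * (sin θ ^ 2 * cos θ ^ 2) / (lam b1 b2 θ ^ 2 * rt b1 b2 b3 θ)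
      - (b1 - b2) * (sin θ ^ 2 * cos θ ^ 2) / (lam b1 b2 θ * rt b1 b2 b3 θ ^ 3)) = 0 := by
  have hne := fun θ => (rt_pos h32 h21 θ).ne'
  have hl : ∀ θ, lam b1 b2 θ ≠ 0 := fun θ => by linarith [le_lam h21 θ]
  have hc := continuous_rt b1 b2 b3
  have hcl := continuous_lam b1 b2
  rw [intervalIntegral.integral_eq_sub_of_hasDerivAt
    (f := fun θ => sin θ * cos θ / (lam b1 b2 θ * rt b1 b2 b3 θ))]
  · simp
  · intro θ _
    have h1 := hne θ
    have h2 := hl θ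
    refine (((hasDerivAt_sin θ).mul (hasDerivAt_cos θ)).div
      ((hasDerivAt_lam b1 b2 θ).mul (hasDerivAt_rt h32 h21 θ)) (mul_ne_zero h2 h1)).congr_deriv ?_
    simp only [Pi.mul_apply]
    field_simp
    ring
  · refine Continuous.intervalIntegrable ?_ _ _
    fun_prop (disch := intro θ; have := hne θ; have := hl θ; positivity)


/-- An integrand that is a combination of the three period integrands, up to multiples of the two
exact forms, integrates to the same combination of periods. The hypothesis is purely algebraic:
`S`, `L`, `q` stand for `sin²θ`, `λ` and `√(λ − b₃)`. -/
lemma integral_comb {b1 b2 b3 : ℝ} (h3 : 0 < b3) (h32 : b3 < b2) (h21 : b2 < b1)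
    (G : ℝ → ℝ → ℝ → ℝ) (c0 c1 cm k km : ℝ)
    (hG : ∀ S L q : ℝ, L ≠ 0 → q ≠ 0 → b3 = L - q ^ 2 → L = b1 * S + b2 * (1 - S) →
      G S L q = c0 * (1 / q) + c1 * (L / q) + cm * (1 / (L * q))
      + k * ((1 - S - S) / q - (b1 - b2) * (S * (1 - S)) / q ^ 3)
      + km * ((1 - S - S) / (L * q) - 2 * (b1 - b2) * (S * (1 - S)) / (L ^ 2 * q)
        - (b1 - b2) * (S * (1 - S)) / (L * q ^ 3))) :
    ∫ θ in (0 : ℝ)..π / 2, G (sin θ ^ 2) (lam b1 b2 θ) (rt b1 b2 b3 θ)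
      = c0 * I0 b1 b2 b3 + c1 * I1 b1 b2 b3 + cm * Im b1 b2 b3 := by
  have hne : ∀ θ, rt b1 b2 b3 θ ≠ 0 := fun θ => (rt_pos h32 h21 θ).ne'
  have hl : ∀ θ, lam b1 b2 θ ≠ 0 := fun θ => by linarith [le_lam h21 θ]
  have hc := continuous_rt b1 b2 b3
  have hcl := continuous_lam b1 b2
  have hg := fun θ => hG (sin θ ^ 2) (lam b1 b2 θ) (rt b1 b2 b3 θ) (hl θ) (hne θ)
    (by linarith [rt_sq h32 h21 θ]) (by rw [lam, cos_sq'])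
  simp only [← cos_sq'] at hg
  rw [funext hg]
  rw [intervalIntegral.integral_add, intervalIntegral.integral_add, intervalIntegral.integral_add,
    intervalIntegral.integral_add]
  · simp only [intervalIntegral.integral_const_mul]
    rw [integral_exact0 h32 h21, integral_exactm h3 h32 h21, I0, I1, Im]
    ring
  all_goals
    refine Continuous.intervalIntegrable ?_ _ _
    fun_prop (disch := intro θ; have := hne θ; have := hl θ; positivity)

/-- Reduction of the period `∂I₀/∂b₁`, the integrand being `∂/∂b₁` of `1/√(λ − b₃)`. The five lemmas
that follow treat the other partial derivatives of `I₀` and `I₋₁` in the same way. -/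
lemma period0_d1 {b1 b2 b3 : ℝ} (h3 : 0 < b3) (h32 : b3 < b2) (h21 : b2 < b1) :
    ∫ θ in (0 : ℝ)..π / 2, (-sin θ ^ 2 / (2 * rt b1 b2 b3 θ ^ 3))
    = (I1 b1 b2 b3 - b1 * I0 b1 b2 b3) / (2 * ((b1 - b2) * (b1 - b3))) := by
  have n12 : b1 - b2 ≠ 0 := by intro h; linarith
  have n13 : b1 - b3 ≠ 0 := by intro h; linarith
  have hb : b1 ≠ 0 := by linarith
  have key := integral_comb h3 h32 h21 (fun S L q => -S / (2 * q ^ 3))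
    (-b1 / (2 * ((b1 - b2) * (b1 - b3)))) (1 / (2 * ((b1 - b2) * (b1 - b3)))) 0
    ((b1 - b2) / (2 * ((b1 - b2) * (b1 - b3)))) 0 ?_
  · rw [key]
    field_simp
    ring
  · intro S L q hL hq e eL
    field_simp
    rw [e, eL]
    ring

lemma periodm_d1 {b1 b2 b3 : ℝ} (h3 : 0 < b3) (h32 : b3 < b2) (h21 : b2 < b1) :
    ∫ θ in (0 : ℝ)..π / 2, (-sin θ ^ 2 / (lam b1 b2 θ ^ 2 * rt b1 b2 b3 θ)
      - sin θ ^ 2 / (2 * (lam b1 b2 θ * rt b1 b2 b3 θ ^ 3)))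
    = ((I1 b1 b2 b3 - b1 * I0 b1 b2 b3) / (2 * ((b1 - b2) * (b1 - b3)))
      - Im b1 b2 b3 / 2) / b1 := by
  have n12 : b1 - b2 ≠ 0 := by intro h; linarith
  have n13 : b1 - b3 ≠ 0 := by intro h; linarith
  have hb : b1 ≠ 0 := by linarith
  have key := integral_comb h3 h32 h21 (fun S L q => -S / (L ^ 2 * q) - S / (2 * (L * q ^ 3)))
    (-1 / (2 * ((b1 - b2) * (b1 - b3)))) (1 / (2 * ((b1 - b2) * (b1 - b3)) * b1))
    (-1 / (2 * b1)) ((b1 - b2) / (2 * ((b1 - b2) * (b1 - b3)) * b1)) (1 / (2 * b1)) ?_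
  · rw [key]
    field_simp
    ring
  · intro S L q hL hq e eL
    field_simp
    rw [e, eL]
    ring

lemma period0_d2 {b1 b2 b3 : ℝ} (h3 : 0 < b3) (h32 : b3 < b2) (h21 : b2 < b1) :
    ∫ θ in (0 : ℝ)..π / 2, (-(1 - sin θ ^ 2) / (2 * rt b1 b2 b3 θ ^ 3))
    = (I1 b1 b2 b3 - b2 * I0 b1 b2 b3) / (2 * ((b2 - b1) * (b2 - b3))) := by
  have n21 : b2 - b1 ≠ 0 := by intro h; linarith
  have n23 : b2 - b3 ≠ 0 := by intro h; linarith
  have hb : b2 ≠ 0 := by linarith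
  have key := integral_comb h3 h32 h21 (fun S L q => -(1 - S) / (2 * q ^ 3))
    (-b2 / (2 * ((b2 - b1) * (b2 - b3)))) (1 / (2 * ((b2 - b1) * (b2 - b3)))) 0
    ((b1 - b2) / (2 * ((b2 - b1) * (b2 - b3)))) 0 ?_
  · rw [key]
    field_simp
    ring
  · intro S L q hL hq e eL
    field_simp
    rw [e, eL]
    ring

lemma periodm_d2 {b1 b2 b3 : ℝ} (h3 : 0 < b3) (h32 : b3 < b2) (h21 : b2 < b1) :
    ∫ θ in (0 : ℝ)..π / 2, (-(1 - sin θ ^ 2) / (lam b1 b2 θ ^ 2 * rt b1 b2 b3 θ)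
      - (1 - sin θ ^ 2) / (2 * (lam b1 b2 θ * rt b1 b2 b3 θ ^ 3)))
    = ((I1 b1 b2 b3 - b2 * I0 b1 b2 b3) / (2 * ((b2 - b1) * (b2 - b3)))
      - Im b1 b2 b3 / 2) / b2 := by
  have n21 : b2 - b1 ≠ 0 := by intro h; linarith
  have n23 : b2 - b3 ≠ 0 := by intro h; linarith
  have hb : b2 ≠ 0 := by linarith
  have key := integral_comb h3 h32 h21 (fun S L q => -(1 - S) / (L ^ 2 * q) - (1 - S) / (2 * (L * q ^ 3)))
    (-1 / (2 * ((b2 - b1) * (b2 - b3)))) (1 / (2 * ((b2 - b1) * (b2 - b3)) * b2))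
    (-1 / (2 * b2)) ((b1 - b2) / (2 * ((b2 - b1) * (b2 - b3)) * b2)) (-1 / (2 * b2)) ?_
  · rw [key]
    field_simp
    ring
  · intro S L q hL hq e eL
    field_simp
    rw [e, eL]
    ring

lemma period0_d3 {b1 b2 b3 : ℝ} (h3 : 0 < b3) (h32 : b3 < b2) (h21 : b2 < b1) :
    ∫ θ in (0 : ℝ)..π / 2, (1 / (2 * rt b1 b2 b3 θ ^ 3))
    = (I1 b1 b2 b3 - b3 * I0 b1 b2 b3) / (2 * ((b3 - b1) * (b3 - b2))) := by
  have n31 : b3 - b1 ≠ 0 := by intro h; linarith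
  have n32 : b3 - b2 ≠ 0 := by intro h; linarith
  have hb : b3 ≠ 0 := by linarith
  have key := integral_comb h3 h32 h21 (fun S L q => 1 / (2 * q ^ 3))
    (-b3 / (2 * ((b3 - b1) * (b3 - b2)))) (1 / (2 * ((b3 - b1) * (b3 - b2)))) 0
    ((b1 - b2) / (2 * ((b3 - b1) * (b3 - b2)))) 0 ?_
  · rw [key]
    field_simp
    ring
  · intro S L q hL hq e eL
    field_simp
    rw [e, eL]
    ring

lemma periodm_d3 {b1 b2 b3 : ℝ} (h3 : 0 < b3) (h32 : b3 < b2) (h21 : b2 < b1) :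
    ∫ θ in (0 : ℝ)..π / 2, (1 / (2 * (lam b1 b2 θ * rt b1 b2 b3 θ ^ 3)))
    = ((I1 b1 b2 b3 - b3 * I0 b1 b2 b3) / (2 * ((b3 - b1) * (b3 - b2)))
      - Im b1 b2 b3 / 2) / b3 := by
  have n31 : b3 - b1 ≠ 0 := by intro h; linarith
  have n32 : b3 - b2 ≠ 0 := by intro h; linarith
  have hb : b3 ≠ 0 := by linarith
  have key := integral_comb h3 h32 h21 (fun S L q => 1 / (2 * (L * q ^ 3)))
    (-1 / (2 * ((b3 - b1) * (b3 - b2)))) (1 / (2 * ((b3 - b1) * (b3 - b2)) * b3))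
    (-1 / (2 * b3)) ((b1 - b2) / (2 * ((b3 - b1) * (b3 - b2)) * b3)) 0 ?_
  · rw [key]
    field_simp
    ring
  · intro S L q hL hq e eL
    field_simp
    rw [e, eL]
    ring


/-! ### Derivatives of the periods along curves -/

/-- Differentiation under the integral sign over `[0, π/2]` when the derivative is jointly continuous. -/
lemma hasDerivAt_param {F F' : ℝ → ℝ → ℝ} {t0 : ℝ} {U : Set ℝ} (hU : U ∈ 𝓝 t0)
    (hF : ∀ t ∈ U, Continuous (F t))
    (hF' : ContinuousOn (fun p : ℝ × ℝ => F' p.1 p.2) (U ×ˢ univ))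
    (hd : ∀ t ∈ U, ∀ θ, HasDerivAt (fun t => F t θ) (F' t θ) t) :
    HasDerivAt (fun t => ∫ θ in (0 : ℝ)..π / 2, F t θ) (∫ θ in (0 : ℝ)..π / 2, F' t0 θ) t0 := by
  obtain ⟨ε, hε, hεU⟩ := Metric.nhds_basis_closedBall.mem_iff.1 hU
  obtain ⟨C, hC⟩ := ((isCompact_closedBall t0 ε).prod (isCompact_Icc (a := (0 : ℝ)) (b := π / 2)))
    |>.exists_bound_of_continuousOn (hF'.mono (prod_mono hεU (subset_univ _)))
  have hF'c : Continuous (F' t0) := by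
    rw [← continuousOn_univ]
    exact hF'.comp (f := fun θ => (t0, θ)) (by fun_prop) fun θ _ => ⟨mem_of_mem_nhds hU, mem_univ _⟩
  refine (intervalIntegral.hasDerivAt_integral_of_dominated_loc_of_deriv_le
    (bound := fun _ => C) (Metric.closedBall_mem_nhds t0 hε) ?_ ?_ ?_ ?_ ?_ ?_).2
  · filter_upwards [hU] with t ht using (hF t ht).aestronglyMeasurable
  · exact (hF t0 (mem_of_mem_nhds hU)).intervalIntegrable _ _
  · exact hF'c.aestronglyMeasurable
  · refine Eventually.of_forall fun θ hθ t ht => hC (t, θ) ⟨ht, ?_⟩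
    rw [uIoc_of_le (by positivity)] at hθ
    exact ⟨hθ.1.le, hθ.2⟩
  · exact intervalIntegrable_const
  · exact Eventually.of_forall fun θ _ t ht => hd t (hεU ht) θ

/-- `0 < b₃ < b₂ < b₁`. -/
def Dom (b1 b2 b3 : ℝ) : Prop := 0 < b3 ∧ b3 < b2 ∧ b2 < b1

lemma dom_nhds {β1 β2 β3 : ℝ → ℝ} (c1 : Continuous β1) (c2 : Continuous β2) (c3 : Continuous β3)
    {t0 : ℝ} (h : Dom (β1 t0) (β2 t0) (β3 t0)) : {t | Dom (β1 t) (β2 t) (β3 t)} ∈ 𝓝 t0 :=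
  ((isOpen_lt continuous_const c3).inter
    ((isOpen_lt c3 c2).inter (isOpen_lt c2 c1))).mem_nhds h

lemma integral_lin3 {f g h : ℝ → ℝ} (hf : Continuous f) (hg : Continuous g) (hh : Continuous h)
    (x y z : ℝ) : ∫ θ in (0 : ℝ)..π / 2, (x * f θ + y * g θ + z * h θ)
      = x * (∫ θ in (0 : ℝ)..π / 2, f θ) + y * (∫ θ in (0 : ℝ)..π / 2, g θ)
        + z * (∫ θ in (0 : ℝ)..π / 2, h θ) := by
  rw [intervalIntegral.integral_add, intervalIntegral.integral_add]
  · simp only [intervalIntegral.integral_const_mul]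
  all_goals exact Continuous.intervalIntegrable (by fun_prop) _ _

lemma hasDerivAt_lam_curve {β1 β2 d1 d2 : ℝ → ℝ}
    (h1 : ∀ t, HasDerivAt β1 (d1 t) t) (h2 : ∀ t, HasDerivAt β2 (d2 t) t) (t θ : ℝ) :
    HasDerivAt (fun t => lam (β1 t) (β2 t) θ)
      (d1 t * sin θ ^ 2 + d2 t * (1 - sin θ ^ 2)) t := by
  rw [← cos_sq']
  exact ((h1 t).mul_const _).add ((h2 t).mul_const _)

lemma hasDerivAt_rt_curve {β1 β2 β3 d1 d2 d3 : ℝ → ℝ}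
    (h1 : ∀ t, HasDerivAt β1 (d1 t) t) (h2 : ∀ t, HasDerivAt β2 (d2 t) t)
    (h3 : ∀ t, HasDerivAt β3 (d3 t) t) (t θ : ℝ) (hD : Dom (β1 t) (β2 t) (β3 t)) :
    HasDerivAt (fun t => rt (β1 t) (β2 t) (β3 t) θ)
      ((d1 t * sin θ ^ 2 + d2 t * (1 - sin θ ^ 2) - d3 t) / (2 * rt (β1 t) (β2 t) (β3 t) θ)) t :=
  ((hasDerivAt_lam_curve h1 h2 t θ).sub (h3 t)).sqrt
    (by simp only [Pi.sub_apply]; linarith [le_lam hD.2.2 θ, hD.2.1])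

/-- Chain rule for `I₀` along a `C¹` curve. -/
lemma hasDerivAt_I0 {β1 β2 β3 d1 d2 d3 : ℝ → ℝ}
    (h1 : ∀ t, HasDerivAt β1 (d1 t) t) (h2 : ∀ t, HasDerivAt β2 (d2 t) t)
    (h3 : ∀ t, HasDerivAt β3 (d3 t) t)
    (c1 : Continuous d1) (c2 : Continuous d2) (c3 : Continuous d3) {t0 b1 b2 b3 : ℝ}
    (e1 : β1 t0 = b1) (e2 : β2 t0 = b2) (e3 : β3 t0 = b3)
    (hD : Dom b1 b2 b3) :
    HasDerivAt (fun t => I0 (β1 t) (β2 t) (β3 t))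
      (d1 t0 * ((I1 b1 b2 b3 - b1 * I0 b1 b2 b3) / (2 * ((b1 - b2) * (b1 - b3))))
        + d2 t0 * ((I1 b1 b2 b3 - b2 * I0 b1 b2 b3) / (2 * ((b2 - b1) * (b2 - b3))))
        + d3 t0 * ((I1 b1 b2 b3 - b3 * I0 b1 b2 b3) / (2 * ((b3 - b1) * (b3 - b2))))) t0 := by
  have k1 : Continuous β1 := continuous_iff_continuousAt.2 fun t => (h1 t).continuousAt
  have k2 : Continuous β2 := continuous_iff_continuousAt.2 fun t => (h2 t).continuousAt
  have k3 : Continuous β3 := continuous_iff_continuousAt.2 fun t => (h3 t).continuousAt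
  have hU := dom_nhds k1 k2 k3 (t0 := t0) (by rw [e1, e2, e3]; exact hD)
  have hne : ∀ b1 b2 b3, Dom b1 b2 b3 → ∀ θ, rt b1 b2 b3 θ ≠ 0 :=
    fun _ _ _ h θ => (rt_pos h.2.1 h.2.2 θ).ne'
  have key := hasDerivAt_param (F := fun t θ => 1 / rt (β1 t) (β2 t) (β3 t) θ)
    (F' := fun t θ => d1 t * (-sin θ ^ 2 / (2 * rt (β1 t) (β2 t) (β3 t) θ ^ 3))
      + d2 t * (-(1 - sin θ ^ 2) / (2 * rt (β1 t) (β2 t) (β3 t) θ ^ 3))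
      + d3 t * (1 / (2 * rt (β1 t) (β2 t) (β3 t) θ ^ 3))) hU ?_ ?_ ?_
  · rw [← period0_d1 hD.1 hD.2.1 hD.2.2, ← period0_d2 hD.1 hD.2.1 hD.2.2,
      ← period0_d3 hD.1 hD.2.1 hD.2.2]
    simp only [e1, e2, e3] at key
    rw [integral_lin3] at key
    · exact key
    all_goals
      have := continuous_rt b1 b2 b3
      have hne' := hne _ _ _ hD
      fun_prop (disch := intro θ; have := hne' θ; positivity)
  · intro t ht
    have := continuous_rt (β1 t) (β2 t) (β3 t)
    have hne' := hne _ _ _ ht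
    fun_prop (disch := intro θ; have := hne' θ; positivity)
  · have hc : Continuous fun p : ℝ × ℝ => rt (β1 p.1) (β2 p.1) (β3 p.1) p.2 := by
      unfold rt lam; fun_prop
    have hq3 : ∀ p ∈ {t | Dom (β1 t) (β2 t) (β3 t)} ×ˢ (univ : Set ℝ),
        2 * rt (β1 p.1) (β2 p.1) (β3 p.1) p.2 ^ 3 ≠ 0 := by
      intro p hp
      have := hne _ _ _ hp.1 p.2
      positivity
    have hc' := hc.continuousOn (s := {t | Dom (β1 t) (β2 t) (β3 t)} ×ˢ univ)
    fun_prop (disch := assumption)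
  · intro t ht θ
    have hq := hne _ _ _ ht θ
    refine ((hasDerivAt_const t (1 : ℝ)).div
      (hasDerivAt_rt_curve h1 h2 h3 t θ ht) hq).congr_deriv ?_
    field_simp
    ring

/-- Chain rule for `I₋₁` along a `C¹` curve. -/
lemma hasDerivAt_Im {β1 β2 β3 d1 d2 d3 : ℝ → ℝ}
    (h1 : ∀ t, HasDerivAt β1 (d1 t) t) (h2 : ∀ t, HasDerivAt β2 (d2 t) t)
    (h3 : ∀ t, HasDerivAt β3 (d3 t) t)
    (c1 : Continuous d1) (c2 : Continuous d2) (c3 : Continuous d3) {t0 b1 b2 b3 : ℝ}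
    (e1 : β1 t0 = b1) (e2 : β2 t0 = b2) (e3 : β3 t0 = b3)
    (hD : Dom b1 b2 b3) :
    HasDerivAt (fun t => Im (β1 t) (β2 t) (β3 t))
      (d1 t0 * (((I1 b1 b2 b3 - b1 * I0 b1 b2 b3) / (2 * ((b1 - b2) * (b1 - b3)))
          - Im b1 b2 b3 / 2) / b1)
        + d2 t0 * (((I1 b1 b2 b3 - b2 * I0 b1 b2 b3) / (2 * ((b2 - b1) * (b2 - b3)))
          - Im b1 b2 b3 / 2) / b2)
        + d3 t0 * (((I1 b1 b2 b3 - b3 * I0 b1 b2 b3) / (2 * ((b3 - b1) * (b3 - b2)))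
          - Im b1 b2 b3 / 2) / b3)) t0 := by
  have k1 : Continuous β1 := continuous_iff_continuousAt.2 fun t => (h1 t).continuousAt
  have k2 : Continuous β2 := continuous_iff_continuousAt.2 fun t => (h2 t).continuousAt
  have k3 : Continuous β3 := continuous_iff_continuousAt.2 fun t => (h3 t).continuousAt
  have hU := dom_nhds k1 k2 k3 (t0 := t0) (by rw [e1, e2, e3]; exact hD)
  have hne : ∀ b1 b2 b3, Dom b1 b2 b3 → ∀ θ, rt b1 b2 b3 θ ≠ 0 :=
    fun _ _ _ h θ => (rt_pos h.2.1 h.2.2 θ).ne'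
  have hln : ∀ b1 b2 b3, Dom b1 b2 b3 → ∀ θ, lam b1 b2 θ ≠ 0 :=
    fun _ _ _ h θ => by linarith [le_lam h.2.2 θ, h.1, h.2.1]
  have key := hasDerivAt_param
    (F := fun t θ => 1 / (lam (β1 t) (β2 t) θ * rt (β1 t) (β2 t) (β3 t) θ))
    (F' := fun t θ => d1 t * (-sin θ ^ 2 / (lam (β1 t) (β2 t) θ ^ 2 * rt (β1 t) (β2 t) (β3 t) θ)
        - sin θ ^ 2 / (2 * (lam (β1 t) (β2 t) θ * rt (β1 t) (β2 t) (β3 t) θ ^ 3)))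
      + d2 t * (-(1 - sin θ ^ 2) / (lam (β1 t) (β2 t) θ ^ 2 * rt (β1 t) (β2 t) (β3 t) θ)
        - (1 - sin θ ^ 2) / (2 * (lam (β1 t) (β2 t) θ * rt (β1 t) (β2 t) (β3 t) θ ^ 3)))
      + d3 t * (1 / (2 * (lam (β1 t) (β2 t) θ * rt (β1 t) (β2 t) (β3 t) θ ^ 3)))) hU ?_ ?_ ?_
  · rw [← periodm_d1 hD.1 hD.2.1 hD.2.2, ← periodm_d2 hD.1 hD.2.1 hD.2.2,
      ← periodm_d3 hD.1 hD.2.1 hD.2.2]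
    simp only [e1, e2, e3] at key
    rw [integral_lin3] at key
    · exact key
    all_goals
      have := continuous_rt b1 b2 b3
      have := continuous_lam b1 b2
      have hne' := hne _ _ _ hD
      have hln' := hln _ _ _ hD
      fun_prop (disch := intro θ; have := hne' θ; have := hln' θ; positivity)
  · intro t ht
    have := continuous_rt (β1 t) (β2 t) (β3 t)
    have := continuous_lam (β1 t) (β2 t)
    have hne' := hne _ _ _ ht
    have hln' := hln _ _ _ ht
    fun_prop (disch := intro θ; have := hne' θ; have := hln' θ; positivity)
  · have hc : Continuous fun p : ℝ × ℝ => rt (β1 p.1) (β2 p.1) (β3 p.1) p.2 := by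
      unfold rt lam; fun_prop
    have hcl : Continuous fun p : ℝ × ℝ => lam (β1 p.1) (β2 p.1) p.2 := by
      unfold lam; fun_prop
    fun_prop (disch := rintro ⟨t, θ⟩ ⟨ht, -⟩; have := hne _ _ _ ht θ; have := hln _ _ _ ht θ;
                       positivity)
  · intro t ht θ
    have hq := hne _ _ _ ht θ
    have hl := hln _ _ _ ht θ
    refine ((hasDerivAt_const t (1 : ℝ)).div ((hasDerivAt_lam_curve h1 h2 t θ).mul
      (hasDerivAt_rt_curve h1 h2 h3 t θ ht)) (mul_ne_zero hl hq)).congr_deriv ?_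
    simp only [Pi.mul_apply]
    field_simp
    ring

/-! ### Bounds on the periods -/

lemma I0_pos {b1 b2 b3 : ℝ} (hD : Dom b1 b2 b3) : 0 < I0 b1 b2 b3 := by
  have hne : ∀ θ, rt b1 b2 b3 θ ≠ 0 := fun θ => (rt_pos hD.2.1 hD.2.2 θ).ne'
  have hc := continuous_rt b1 b2 b3
  refine intervalIntegral.intervalIntegral_pos_of_pos_on
    (Continuous.intervalIntegrable (by fun_prop (disch := exact hne)) _ _)
    (fun θ _ => one_div_pos.2 (rt_pos hD.2.1 hD.2.2 θ)) (by positivity)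

/-- The mean `I₁ / I₀` of `λ` lies strictly between `b₂` and `b₁`. -/
lemma I1_bounds {b1 b2 b3 : ℝ} (hD : Dom b1 b2 b3) :
    b2 * I0 b1 b2 b3 < I1 b1 b2 b3 ∧ I1 b1 b2 b3 < b1 * I0 b1 b2 b3 := by
  have hpos : ∀ θ, 0 < rt b1 b2 b3 θ := fun θ => rt_pos hD.2.1 hD.2.2 θ
  have hne : ∀ θ, rt b1 b2 b3 θ ≠ 0 := fun θ => (hpos θ).ne'
  have hc := continuous_rt b1 b2 b3
  have hcl := continuous_lam b1 b2
  have hi0 : IntervalIntegrable (fun θ => 1 / rt b1 b2 b3 θ) volume 0 (π / 2) :=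
    Continuous.intervalIntegrable (by fun_prop (disch := exact hne)) _ _
  have hi1 : IntervalIntegrable (fun θ => lam b1 b2 θ / rt b1 b2 b3 θ) volume 0 (π / 2) :=
    Continuous.intervalIntegrable (by fun_prop (disch := exact hne)) _ _
  have hsc : ∀ θ ∈ Ioo 0 (π / 2), 0 < sin θ ^ 2 ∧ 0 < cos θ ^ 2 := fun θ hθ =>
    ⟨pow_pos (sin_pos_of_pos_of_lt_pi hθ.1 (by linarith [hθ.2, pi_pos])) 2,
      pow_pos (cos_pos_of_mem_Ioo ⟨by linarith [hθ.1, pi_pos], hθ.2⟩) 2⟩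
  have hb : 0 < b1 - b2 := by linarith [hD.2.2]
  constructor
  · have := intervalIntegral.intervalIntegral_pos_of_pos_on (hi1.sub (hi0.const_mul b2))
      (fun θ hθ => ?_) (by positivity)
    · rw [intervalIntegral.integral_sub hi1 (hi0.const_mul b2),
        intervalIntegral.integral_const_mul] at this
      exact sub_pos.1 this
    · have e : lam b1 b2 θ - b2 = (b1 - b2) * sin θ ^ 2 := by rw [lam, cos_sq']; ring
      have : lam b1 b2 θ / rt b1 b2 b3 θ - b2 * (1 / rt b1 b2 b3 θ)
          = (b1 - b2) * sin θ ^ 2 / rt b1 b2 b3 θ := by rw [← e]; ring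
      rw [this]
      exact div_pos (mul_pos hb (hsc θ hθ).1) (hpos θ)
  · have := intervalIntegral.intervalIntegral_pos_of_pos_on ((hi0.const_mul b1).sub hi1)
      (fun θ hθ => ?_) (by positivity)
    · rw [intervalIntegral.integral_sub (hi0.const_mul b1) hi1,
        intervalIntegral.integral_const_mul] at this
      exact sub_pos.1 this
    · have e : b1 - lam b1 b2 θ = (b1 - b2) * cos θ ^ 2 := by rw [lam, sin_sq]; ring
      have : b1 * (1 / rt b1 b2 b3 θ) - lam b1 b2 θ / rt b1 b2 b3 θ
          = (b1 - b2) * cos θ ^ 2 / rt b1 b2 b3 θ := by rw [← e]; ring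
      rw [this]
      exact div_pos (mul_pos hb (hsc θ hθ).2) (hpos θ)


/-! ### Derivatives of `α₀`, `ℋ₀`, `𝒩` -/

/-- `eᵢ = ∂ᵢ log I₀ = −(bᵢ + α₁) / (2 ∏_{j ≠ i} (bᵢ − bⱼ))`, with the pair `(bⱼ, bₖ)` of the
other two branch points. -/
noncomputable def logDer (a1 bi bj bk : ℝ) : ℝ := -(bi + a1) / (2 * ((bi - bj) * (bi - bk)))

/-- Chain rule for `α₀ = −I₋₁ / I₀` along a `C¹` curve. -/
lemma hasDerivAt_a0 {β1 β2 β3 d1 d2 d3 : ℝ → ℝ}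
    (h1 : ∀ t, HasDerivAt β1 (d1 t) t) (h2 : ∀ t, HasDerivAt β2 (d2 t) t)
    (h3 : ∀ t, HasDerivAt β3 (d3 t) t)
    (c1 : Continuous d1) (c2 : Continuous d2) (c3 : Continuous d3) {t0 b1 b2 b3 a0 a1 : ℝ}
    (e1 : β1 t0 = b1) (e2 : β2 t0 = b2) (e3 : β3 t0 = b3) (hD : Dom b1 b2 b3)
    (ha0 : a0 = -Im b1 b2 b3 / I0 b1 b2 b3) (ha1 : a1 = -I1 b1 b2 b3 / I0 b1 b2 b3) :
    HasDerivAt (fun t => -Im (β1 t) (β2 t) (β3 t) / I0 (β1 t) (β2 t) (β3 t))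
      (d1 t0 * (-(logDer a1 b1 b2 b3) / b1 - a0 / (2 * b1) - a0 * logDer a1 b1 b2 b3)
      + d2 t0 * (-(logDer a1 b2 b1 b3) / b2 - a0 / (2 * b2) - a0 * logDer a1 b2 b1 b3)
      + d3 t0 * (-(logDer a1 b3 b1 b2) / b3 - a0 / (2 * b3) - a0 * logDer a1 b3 b1 b2)) t0 := by
  have hI : I0 b1 b2 b3 ≠ 0 := (I0_pos hD).ne'
  have k0 := hasDerivAt_I0 h1 h2 h3 c1 c2 c3 e1 e2 e3 hD
  have km := hasDerivAt_Im h1 h2 h3 c1 c2 c3 e1 e2 e3 hD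
  refine (km.neg.div k0 (by rw [e1, e2, e3]; exact hI)).congr_deriv ?_
  have hE : ∀ bi bj bk : ℝ, (I1 b1 b2 b3 - bi * I0 b1 b2 b3) / (2 * ((bi - bj) * (bi - bk)))
      = I0 b1 b2 b3 * logDer a1 bi bj bk := by
    intro bi bj bk
    rw [logDer, ha1, ← mul_div_assoc]
    congr 1
    field_simp
    ring
  have hm : Im b1 b2 b3 = -(a0 * I0 b1 b2 b3) := by rw [ha0]; field_simp
  have n1 : b1 ≠ 0 := by linarith [hD.1, hD.2.1, hD.2.2]
  have n2 : b2 ≠ 0 := by linarith [hD.1, hD.2.1]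
  have n3 : b3 ≠ 0 := hD.1.ne'
  simp only [hE, Pi.neg_apply, e1, e2, e3, hm]
  field_simp
  ring

/-- Chain rule for `ℋ₀` along a `C¹` curve; the coefficient of `dᵢ` is `∂ᵢ ℋ₀`. -/
lemma hasDerivAt_H {β1 β2 β3 d1 d2 d3 : ℝ → ℝ}
    (h1 : ∀ t, HasDerivAt β1 (d1 t) t) (h2 : ∀ t, HasDerivAt β2 (d2 t) t)
    (h3 : ∀ t, HasDerivAt β3 (d3 t) t)
    (c1 : Continuous d1) (c2 : Continuous d2) (c3 : Continuous d3) {t0 b1 b2 b3 a0 a1 : ℝ}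
    (e1 : β1 t0 = b1) (e2 : β2 t0 = b2) (e3 : β3 t0 = b3) (hD : Dom b1 b2 b3)
    (ha0 : a0 = -Im b1 b2 b3 / I0 b1 b2 b3) (ha1 : a1 = -I1 b1 b2 b3 / I0 b1 b2 b3) :
    HasDerivAt (fun t => -√(β1 t * β2 t * β3 t)
        * (-Im (β1 t) (β2 t) (β3 t) / I0 (β1 t) (β2 t) (β3 t)))
      (d1 t0 * (√(b1 * b2 * b3) * logDer a1 b1 b2 b3 * (1 / b1 + a0))
      + d2 t0 * (√(b1 * b2 * b3) * logDer a1 b2 b1 b3 * (1 / b2 + a0))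
      + d3 t0 * (√(b1 * b2 * b3) * logDer a1 b3 b1 b2 * (1 / b3 + a0))) t0 := by
  have p3 : 0 < b3 := hD.1
  have p2 : 0 < b2 := by linarith [hD.2.1]
  have p1 : 0 < b1 := by linarith [hD.2.2]
  have ka := hasDerivAt_a0 h1 h2 h3 c1 c2 c3 e1 e2 e3 hD ha0 ha1
  have hr : 0 < √(b1 * b2 * b3) := sqrt_pos.2 (by positivity)
  have hr2 : √(b1 * b2 * b3) ^ 2 = b1 * b2 * b3 := sq_sqrt (by positivity)
  have ks := (((h1 t0).mul (h2 t0)).mul (h3 t0)).sqrt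
    (by simp only [Pi.mul_apply, e1, e2, e3]; positivity)
  refine (ks.neg.mul ka).congr_deriv ?_
  simp only [Pi.neg_apply, Pi.mul_apply, e1, e2, e3, ← ha0]
  generalize √(b1 * b2 * b3) = r at *
  have hs : (d1 t0 * b2 + b1 * d2 t0) * b3 + b1 * b2 * d3 t0
      = r ^ 2 * (d1 t0 / b1 + d2 t0 / b2 + d3 t0 / b3) := by
    rw [hr2]; field_simp
  rw [hs]
  field_simp
  ring

/-- Chain rule for `𝒩` along a `C¹` curve; the coefficient of `dᵢ` is `∂ᵢ 𝒩`. -/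
lemma hasDerivAt_N (ν : ℝ) {β1 β2 β3 d1 d2 d3 : ℝ → ℝ}
    (h1 : ∀ t, HasDerivAt β1 (d1 t) t) (h2 : ∀ t, HasDerivAt β2 (d2 t) t)
    (h3 : ∀ t, HasDerivAt β3 (d3 t) t)
    (c1 : Continuous d1) (c2 : Continuous d2) (c3 : Continuous d3) {t0 b1 b2 b3 a0 a1 : ℝ}
    (e1 : β1 t0 = b1) (e2 : β2 t0 = b2) (e3 : β3 t0 = b3) (hD : Dom b1 b2 b3)
    (ha0 : a0 = -Im b1 b2 b3 / I0 b1 b2 b3) (ha1 : a1 = -I1 b1 b2 b3 / I0 b1 b2 b3) :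
    HasDerivAt (fun t => 1 / β1 t + 1 / β2 t + 1 / β3 t - ν
        + 2 * (-Im (β1 t) (β2 t) (β3 t) / I0 (β1 t) (β2 t) (β3 t)))
      (d1 t0 * (-(1 / b1 + a0) * (1 / b1 + 2 * logDer a1 b1 b2 b3))
      + d2 t0 * (-(1 / b2 + a0) * (1 / b2 + 2 * logDer a1 b2 b1 b3))
      + d3 t0 * (-(1 / b3 + a0) * (1 / b3 + 2 * logDer a1 b3 b1 b2))) t0 := by
  have p3 : 0 < b3 := hD.1
  have p2 : 0 < b2 := by linarith [hD.2.1]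
  have p1 : 0 < b1 := by linarith [hD.2.2]
  have ka := hasDerivAt_a0 h1 h2 h3 c1 c2 c3 e1 e2 e3 hD ha0 ha1
  have i1 := (hasDerivAt_const t0 (1 : ℝ)).div (h1 t0) (by rw [e1]; exact p1.ne')
  have i2 := (hasDerivAt_const t0 (1 : ℝ)).div (h2 t0) (by rw [e2]; exact p2.ne')
  have i3 := (hasDerivAt_const t0 (1 : ℝ)).div (h3 t0) (by rw [e3]; exact p3.ne')
  refine ((((i1.add i2).add i3).sub_const ν).add (ka.const_mul 2)).congr_deriv ?_
  simp only [e1, e2, e3]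
  field_simp
  ring

/-- The relation `∂ᵢ 𝒩 + vⁱ ∂ᵢ ℋ₀ = 0` in terms of the reduced partial derivatives, with
`r = √(b₁b₂b₃)`. -/
lemma char_rel {r a1 a0 bi bj bk v : ℝ} (hr : r ≠ 0) (hi : bi ≠ 0) (hj : bi - bj ≠ 0)
    (hk : bi - bk ≠ 0) (ha : bi + a1 ≠ 0)
    (hv : v = 2 / r * (1 - (bi - bj) * (bi - bk) / (bi * (bi + a1)))) :
    -(1 / bi + a0) * (1 / bi + 2 * logDer a1 bi bj bk)
      + v * (r * logDer a1 bi bj bk * (1 / bi + a0)) = 0 := by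
  rw [hv, logDer]
  field_simp
  ring

end NegKdV

open NegKdV in
/-- the one-form `ℋ₀dy + 𝒩dτ` is closed along solutions of the negative KdV
Whitham system: `∂𝒩/∂β^i + v^i∂ℋ₀/∂β^i = 0` on `{0 < β³ < β² < β¹}`, and consequently
`∂_τ(ℋ₀∘β) = ∂_y(𝒩∘β)` along any C¹ solution, so `dx = ℋ₀dy + 𝒩dτ, dt = dτ` is a
reciprocal transformation for the averaged negative KdV flow. -/
theorem stmt_16 (ν : ℝ)
    (J0 J1 Jm1 a0 a1 v1 v2 v3 H0 N : ℝ → ℝ → ℝ → ℝ)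
    (hJ0 : ∀ b1 b2 b3, J0 b1 b2 b3 =
      2 * ∫ l in b2..b1, 1 / Real.sqrt ((b1 - l) * (l - b2) * (l - b3)))
    (hJ1 : ∀ b1 b2 b3, J1 b1 b2 b3 =
      2 * ∫ l in b2..b1, l / Real.sqrt ((b1 - l) * (l - b2) * (l - b3)))
    (hJm1 : ∀ b1 b2 b3, Jm1 b1 b2 b3 =
      2 * ∫ l in b2..b1, 1 / (l * Real.sqrt ((b1 - l) * (l - b2) * (l - b3))))
    (ha1 : ∀ b1 b2 b3, a1 b1 b2 b3 = -(J1 b1 b2 b3) / J0 b1 b2 b3)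
    (ha0 : ∀ b1 b2 b3, a0 b1 b2 b3 = -(Jm1 b1 b2 b3) / J0 b1 b2 b3)
    (hv1 : ∀ b1 b2 b3, v1 b1 b2 b3 = (2 / Real.sqrt (b1 * b2 * b3))
      * (1 - (b1 - b2) * (b1 - b3) / (b1 * (b1 + a1 b1 b2 b3))))
    (hv2 : ∀ b1 b2 b3, v2 b1 b2 b3 = (2 / Real.sqrt (b1 * b2 * b3))
      * (1 - (b2 - b1) * (b2 - b3) / (b2 * (b2 + a1 b1 b2 b3))))
    (hv3 : ∀ b1 b2 b3, v3 b1 b2 b3 = (2 / Real.sqrt (b1 * b2 * b3))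
      * (1 - (b3 - b1) * (b3 - b2) / (b3 * (b3 + a1 b1 b2 b3))))
    (hH0 : ∀ b1 b2 b3, H0 b1 b2 b3 = -Real.sqrt (b1 * b2 * b3) * a0 b1 b2 b3)
    (hN : ∀ b1 b2 b3, N b1 b2 b3 = 1 / b1 + 1 / b2 + 1 / b3 - ν + 2 * a0 b1 b2 b3) :
    (∀ b1 b2 b3 : ℝ, 0 < b3 → b3 < b2 → b2 < b1 →
      ∃ dH1 dH2 dH3 dN1 dN2 dN3 : ℝ,
        HasDerivAt (fun x => H0 x b2 b3) dH1 b1 ∧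
        HasDerivAt (fun x => H0 b1 x b3) dH2 b2 ∧
        HasDerivAt (fun x => H0 b1 b2 x) dH3 b3 ∧
        HasDerivAt (fun x => N x b2 b3) dN1 b1 ∧
        HasDerivAt (fun x => N b1 x b3) dN2 b2 ∧
        HasDerivAt (fun x => N b1 b2 x) dN3 b3 ∧
        dN1 + v1 b1 b2 b3 * dH1 = 0 ∧
        dN2 + v2 b1 b2 b3 * dH2 = 0 ∧
        dN3 + v3 b1 b2 b3 * dH3 = 0)
    ∧ (∀ B1 B2 B3 : ℝ → ℝ → ℝ,
        ContDiff ℝ 1 (fun p : ℝ × ℝ => B1 p.1 p.2) →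
        ContDiff ℝ 1 (fun p : ℝ × ℝ => B2 p.1 p.2) →
        ContDiff ℝ 1 (fun p : ℝ × ℝ => B3 p.1 p.2) →
        (∀ y τ, 0 < B3 y τ ∧ B3 y τ < B2 y τ ∧ B2 y τ < B1 y τ) →
        (∀ y τ, deriv (fun s => B1 y s) τ
          + v1 (B1 y τ) (B2 y τ) (B3 y τ) * deriv (fun a => B1 a τ) y = 0) →
        (∀ y τ, deriv (fun s => B2 y s) τ
          + v2 (B1 y τ) (B2 y τ) (B3 y τ) * deriv (fun a => B2 a τ) y = 0) →
        (∀ y τ, deriv (fun s => B3 y s) τ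
          + v3 (B1 y τ) (B2 y τ) (B3 y τ) * deriv (fun a => B3 a τ) y = 0) →
        ∀ y τ, deriv (fun s => H0 (B1 y s) (B2 y s) (B3 y s)) τ
          = deriv (fun a => N (B1 a τ) (B2 a τ) (B3 a τ)) y) := by
  have hJ0' : ∀ b1 b2 b3, Dom b1 b2 b3 → J0 b1 b2 b3 = 4 * I0 b1 b2 b3 := by
    intro b1 b2 b3 h
    rw [hJ0, integral_subst h.2.1 h.2.2 (fun _ => 1), I0]
    ring
  have hJ1' : ∀ b1 b2 b3, Dom b1 b2 b3 → J1 b1 b2 b3 = 4 * I1 b1 b2 b3 := by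
    intro b1 b2 b3 h
    rw [hJ1, integral_subst h.2.1 h.2.2 (fun l => l), I1]
    ring
  have hJm' : ∀ b1 b2 b3, Dom b1 b2 b3 → Jm1 b1 b2 b3 = 4 * Im b1 b2 b3 := by
    intro b1 b2 b3 h
    have := integral_subst h.2.1 h.2.2 (fun l => 1 / l)
    simp only [div_div] at this
    rw [hJm1, this, Im]
    ring
  have ha0' : ∀ b1 b2 b3, Dom b1 b2 b3 → a0 b1 b2 b3 = -Im b1 b2 b3 / I0 b1 b2 b3 := by
    intro b1 b2 b3 h
    have := (I0_pos h).ne'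
    rw [ha0, hJ0' _ _ _ h, hJm' _ _ _ h]
    field_simp
  have ha1' : ∀ b1 b2 b3, Dom b1 b2 b3 → a1 b1 b2 b3 = -I1 b1 b2 b3 / I0 b1 b2 b3 := by
    intro b1 b2 b3 h
    have := (I0_pos h).ne'
    rw [ha1, hJ0' _ _ _ h, hJ1' _ _ _ h]
    field_simp
  have hrel : ∀ b1 b2 b3, Dom b1 b2 b3 →
      -(1 / b1 + a0 b1 b2 b3) * (1 / b1 + 2 * logDer (a1 b1 b2 b3) b1 b2 b3) + v1 b1 b2 b3
        * (√(b1 * b2 * b3) * logDer (a1 b1 b2 b3) b1 b2 b3 * (1 / b1 + a0 b1 b2 b3)) = 0 ∧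
      -(1 / b2 + a0 b1 b2 b3) * (1 / b2 + 2 * logDer (a1 b1 b2 b3) b2 b1 b3) + v2 b1 b2 b3
        * (√(b1 * b2 * b3) * logDer (a1 b1 b2 b3) b2 b1 b3 * (1 / b2 + a0 b1 b2 b3)) = 0 ∧
      -(1 / b3 + a0 b1 b2 b3) * (1 / b3 + 2 * logDer (a1 b1 b2 b3) b3 b1 b2) + v3 b1 b2 b3
        * (√(b1 * b2 * b3) * logDer (a1 b1 b2 b3) b3 b1 b2 * (1 / b3 + a0 b1 b2 b3)) = 0 := by
    intro b1 b2 b3 h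
    obtain ⟨h3, h32, h21⟩ := id h
    have p2 : 0 < b2 := by linarith
    have p1 : 0 < b1 := by linarith
    have hr : √(b1 * b2 * b3) ≠ 0 := (sqrt_pos.2 (by positivity)).ne'
    have hI := I0_pos h
    obtain ⟨hlo, hhi⟩ := I1_bounds h
    -- `-a1` is a weighted mean of `λ` over `(b2, b1)`
    have m1 : -a1 b1 b2 b3 < b1 := by
      rw [ha1' _ _ _ h, neg_div, neg_neg, div_lt_iff₀ hI]; exact hhi
    have m2 : b2 < -a1 b1 b2 b3 := by
      rw [ha1' _ _ _ h, neg_div, neg_neg, lt_div_iff₀ hI]; exact hlo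
    refine ⟨char_rel hr p1.ne' ?_ ?_ ?_ (hv1 _ _ _), char_rel hr p2.ne' ?_ ?_ ?_ (hv2 _ _ _),
      char_rel hr h3.ne' ?_ ?_ ?_ (hv3 _ _ _)⟩
    all_goals intro h; linarith
  -- chain rule along an arbitrary `C¹` curve that lies in the domain at `t0`
  have hcurve : ∀ (β1 β2 β3 d1 d2 d3 : ℝ → ℝ), (∀ t, HasDerivAt β1 (d1 t) t) →
      (∀ t, HasDerivAt β2 (d2 t) t) → (∀ t, HasDerivAt β3 (d3 t) t) →
      Continuous d1 → Continuous d2 → Continuous d3 → ∀ t0 b1 b2 b3 : ℝ,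
      β1 t0 = b1 → β2 t0 = b2 → β3 t0 = b3 → Dom b1 b2 b3 →
      HasDerivAt (fun t => H0 (β1 t) (β2 t) (β3 t))
        (d1 t0 * (√(b1 * b2 * b3) * logDer (a1 b1 b2 b3) b1 b2 b3 * (1 / b1 + a0 b1 b2 b3))
        + d2 t0 * (√(b1 * b2 * b3) * logDer (a1 b1 b2 b3) b2 b1 b3 * (1 / b2 + a0 b1 b2 b3))
        + d3 t0 * (√(b1 * b2 * b3) * logDer (a1 b1 b2 b3) b3 b1 b2 * (1 / b3 + a0 b1 b2 b3))) t0 ∧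
      HasDerivAt (fun t => N (β1 t) (β2 t) (β3 t))
        (d1 t0 * (-(1 / b1 + a0 b1 b2 b3) * (1 / b1 + 2 * logDer (a1 b1 b2 b3) b1 b2 b3))
        + d2 t0 * (-(1 / b2 + a0 b1 b2 b3) * (1 / b2 + 2 * logDer (a1 b1 b2 b3) b2 b1 b3))
        + d3 t0 * (-(1 / b3 + a0 b1 b2 b3) * (1 / b3 + 2 * logDer (a1 b1 b2 b3) b3 b1 b2))) t0 := by
    intro β1 β2 β3 d1 d2 d3 h1 h2 h3 c1 c2 c3 t0 b1 b2 b3 e1 e2 e3 hD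
    have hU := dom_nhds (t0 := t0)
      (continuous_iff_continuousAt.2 fun t => (h1 t).continuousAt)
      (continuous_iff_continuousAt.2 fun t => (h2 t).continuousAt)
      (continuous_iff_continuousAt.2 fun t => (h3 t).continuousAt)
      (by rw [e1, e2, e3]; exact hD)
    constructor
    · refine (hasDerivAt_H h1 h2 h3 c1 c2 c3 e1 e2 e3 hD (ha0' _ _ _ hD)
        (ha1' _ _ _ hD)).congr_of_eventuallyEq ?_
      filter_upwards [hU] with t ht
      rw [hH0, ha0' _ _ _ ht]
    · refine (hasDerivAt_N ν h1 h2 h3 c1 c2 c3 e1 e2 e3 hD (ha0' _ _ _ hD)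
        (ha1' _ _ _ hD)).congr_of_eventuallyEq ?_
      filter_upwards [hU] with t ht
      rw [hN, ha0' _ _ _ ht]
  refine ⟨?_, ?_⟩
  · intro b1 b2 b3 h3 h32 h21
    have hD : Dom b1 b2 b3 := ⟨h3, h32, h21⟩
    have hid : ∀ t : ℝ, HasDerivAt (fun x : ℝ => x) ((fun _ => (1 : ℝ)) t) t := hasDerivAt_id'
    have hco : ∀ c t : ℝ, HasDerivAt (fun _ : ℝ => c) ((fun _ => (0 : ℝ)) t) t :=
      fun c t => hasDerivAt_const t c
    have k0 : Continuous fun _ : ℝ => (0 : ℝ) := continuous_const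
    have k1 : Continuous fun _ : ℝ => (1 : ℝ) := continuous_const
    obtain ⟨H1, N1⟩ := hcurve _ _ _ _ _ _ hid (hco b2) (hco b3) k1 k0 k0 b1 b1 b2 b3
      rfl rfl rfl hD
    obtain ⟨H2, N2⟩ := hcurve _ _ _ _ _ _ (hco b1) hid (hco b3) k0 k1 k0 b2 b1 b2 b3
      rfl rfl rfl hD
    obtain ⟨H3, N3⟩ := hcurve _ _ _ _ _ _ (hco b1) (hco b2) hid k0 k0 k1 b3 b1 b2 b3
      rfl rfl rfl hD
    obtain ⟨r1, r2, r3⟩ := hrel b1 b2 b3 hD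
    refine ⟨_, _, _, _, _, _, H1, H2, H3, N1, N2, N3, ?_, ?_, ?_⟩
    · linear_combination r1
    · linear_combination r2
    · linear_combination r3
  · intro B1 B2 B3 C1 C2 C3 hdom w1 w2 w3 y τ
    -- slices of a `C¹` function of two variables are `C¹`
    have slice : ∀ B : ℝ → ℝ → ℝ, ContDiff ℝ 1 (fun p : ℝ × ℝ => B p.1 p.2) →
        ((∀ t, HasDerivAt (fun s => B y s) (deriv (fun s => B y s) t) t) ∧
          Continuous (deriv fun s => B y s)) ∧
        ((∀ t, HasDerivAt (fun a => B a τ) (deriv (fun a => B a τ) t) t) ∧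
          Continuous (deriv fun a => B a τ)) := by
      intro B hB
      have hs : ContDiff ℝ 1 (fun s => B y s) :=
        hB.comp (contDiff_const.prodMk contDiff_id : ContDiff ℝ 1 fun s : ℝ => (y, s))
      have ha : ContDiff ℝ 1 (fun a => B a τ) :=
        hB.comp (contDiff_id.prodMk contDiff_const : ContDiff ℝ 1 fun a : ℝ => (a, τ))
      exact ⟨⟨fun t => (hs.differentiable one_ne_zero t).hasDerivAt, hs.continuous_deriv le_rfl⟩,
        ⟨fun t => (ha.differentiable one_ne_zero t).hasDerivAt, ha.continuous_deriv le_rfl⟩⟩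
    obtain ⟨⟨s1, cs1⟩, ⟨y1, cy1⟩⟩ := slice B1 C1
    obtain ⟨⟨s2, cs2⟩, ⟨y2, cy2⟩⟩ := slice B2 C2
    obtain ⟨⟨s3, cs3⟩, ⟨y3, cy3⟩⟩ := slice B3 C3
    have hD : Dom (B1 y τ) (B2 y τ) (B3 y τ) := hdom y τ
    rw [(hcurve _ _ _ _ _ _ s1 s2 s3 cs1 cs2 cs3 τ _ _ _ rfl rfl rfl hD).1.deriv,
      (hcurve _ _ _ _ _ _ y1 y2 y3 cy1 cy2 cy3 y _ _ _ rfl rfl rfl hD).2.deriv]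
    obtain ⟨r1, r2, r3⟩ := hrel _ _ _ hD
    rw [eq_neg_of_add_eq_zero_left (w1 y τ), eq_neg_of_add_eq_zero_left (w2 y τ),
      eq_neg_of_add_eq_zero_left (w3 y τ)]
    linear_combination (-deriv (fun a => B1 a τ) y) * r1 + (-deriv (fun a => B2 a τ) y) * r2
      + (-deriv (fun a => B3 a τ) y) * r3
end

section
/- Fix ν ∈ ℝ and define on D = {0 < β³ < β² < β¹}: Q(λ) = (β¹−λ)(λ−β²)(λ−β³), 𝒥_k = 2∫_{β²}^{β¹} λ^k Q^{−1/2} dλ for k ∈ {−1,0,1}, α₁ = −𝒥₁/𝒥₀, α₀ = −𝒥_{−1}/𝒥₀, v^i(β) = (2/√(β¹β²β³))(1 − ∏_{j≠i}(β^i−β^j)/(β^i(β^i+α₁))), ℋ₀(β) = −√(β¹β²β³)α₀(β), 𝒩(β) = Σ_j 1/β^j − ν + 2α₀(β). Let β : ℝ² → D be a C¹ solution of the modulation equations of the first negative KdV flow, ∂_τ β^i + v^i(β) ∂_y β^i = 0; let x : ℝ² → ℝ be C¹ with ∂_y x = ℋ₀(β(y,τ)) > 0 and ∂_τ x = 𝒩(β(y,τ));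 and let β̃ : ℝ² → D be differentiable with β̃(x(y,τ), τ) = β(y,τ). Then β̃ satisfies the Camassa–Holm modulation equations ∂_t β̃^i + C̃^i(β̃) ∂_x β̃^i = 0 at every image point, where C̃^i(β) = 1/β¹ + 1/β² + 1/β³ − ν + 2α₀ ∏_{j≠i}(β^i−β^j)/(β^i(β^i+α₁)). -/
/-!
Write `b(y, τ) = b̃(x(y, τ), τ)`. The chain rule gives `∂_y b = ℋ₀ ∂_x b̃` and
`∂_τ b = 𝒩 ∂_x b̃ + ∂_t b̃`, so `∂_τ b + v ∂_y b = 0` turns into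
`∂_t b̃ + (𝒩 + v ℋ₀) ∂_x b̃ = 0` (`reciprocal_transport`). The theorem follows because the
Camassa–Holm velocities are `C̃^i = 𝒩 + v^i ℋ₀`: the factor `√(β¹β²β³)` in `ℋ₀` cancels the one
in the denominator of `v^i` (`velocity_identity`).
-/

/-- Under the change of variables `(y, τ) ↦ (x(y, τ), τ)` a transport equation with velocity `v`
becomes one with velocity `C = ∂_τ x + v ∂_y x`. -/
theorem reciprocal_transport (b bt x : ℝ → ℝ → ℝ)
    (hx : Differentiable ℝ (fun p : ℝ × ℝ => x p.1 p.2))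
    (hbt : Differentiable ℝ (fun p : ℝ × ℝ => bt p.1 p.2))
    (hc : ∀ y τ, bt (x y τ) τ = b y τ) (y τ v h n C : ℝ)
    (hw : deriv (fun s => b y s) τ + v * deriv (fun a => b a τ) y = 0)
    (hxy : deriv (fun a => x a τ) y = h) (hxτ : deriv (fun s => x y s) τ = n)
    (hC : C = n + v * h) :
    deriv (fun s => bt (x y τ) s) τ + C * deriv (fun a => bt a τ) (x y τ) = 0 := by
  have hL := (hbt (x y τ, τ)).hasFDerivAt
  set L := fderiv ℝ (fun p : ℝ × ℝ => bt p.1 p.2) (x y τ, τ)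
  have hxa : HasDerivAt (fun a => x a τ) h y := by
    have hd : Differentiable ℝ (fun a => x a τ) :=
      hx.comp (differentiable_id.prodMk (differentiable_const τ))
    exact hxy ▸ (hd y).hasDerivAt
  have hxs : HasDerivAt (fun s => x y s) n τ := by
    have hd : Differentiable ℝ (fun s => x y s) :=
      hx.comp ((differentiable_const y).prodMk differentiable_id)
    exact hxτ ▸ (hd τ).hasDerivAt
  have chain : ∀ (f g : ℝ → ℝ) (f' g' t : ℝ), HasDerivAt f f' t → HasDerivAt g g' t →
      f t = x y τ → g t = τ → deriv (fun r => bt (f r) (g r)) t = L (f', g') := by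
    intro f g f' g' t hf hg hft hgt
    have hL' : HasFDerivAt (fun p : ℝ × ℝ => bt p.1 p.2) L (f t, g t) := by
      rw [hft, hgt]; exact hL
    exact (HasFDerivAt.comp_hasDerivAt (f := fun r => (f r, g r)) t hL' (hf.prodMk hg)).deriv
  have e1 : deriv (fun s => bt (x y τ) s) τ = L (0, 1) :=
    chain (fun _ => x y τ) (fun s => s) 0 1 τ (hasDerivAt_const _ _) (hasDerivAt_id' _) rfl rfl
  have e2 : deriv (fun a => bt a τ) (x y τ) = L (1, 0) :=
    chain (fun a => a) (fun _ => τ) 1 0 (x y τ) (hasDerivAt_id' _) (hasDerivAt_const _ _) rfl rfl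
  have e3 : deriv (fun a => b a τ) y = L (h, 0) := by
    simp only [← hc]
    exact chain (fun a => x a τ) (fun _ => τ) h 0 y hxa (hasDerivAt_const _ _) rfl rfl
  have e4 : deriv (fun s => b y s) τ = L (n, 1) := by
    simp only [← hc]
    exact chain (fun s => x y s) (fun s => s) n 1 τ hxs (hasDerivAt_id' _) rfl rfl
  have l1 : L (h, 0) = h * L (1, 0) := by
    rw [← smul_eq_mul, ← map_smul]; simp
  have l2 : L (n, 1) = n * L (1, 0) + L (0, 1) := by
    rw [← smul_eq_mul, ← map_smul, ← map_add]; simp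
  rw [e3, e4, l1, l2] at hw
  rw [e1, e2, hC]
  linear_combination hw

/-- The identity `C̃ = 𝒩 + v ℋ₀`, with `s = √(β¹β²β³)`, `c = Σ 1/β^j − ν`, and `P / q` the
quotient `∏_{j≠i}(β^i−β^j) / (β^i(β^i+α₁))`. It holds for the junk value `q = 0` as well. -/
theorem velocity_identity (s a c P q : ℝ) (hs : s ≠ 0) :
    c + 2 * a * P / q = c + 2 * a + 2 / s * (1 - P / q) * (-s * a) := by
  have h : 2 / s * s = 2 := div_mul_cancel₀ 2 hs
  linear_combination (a * (1 - P / q)) * h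

/-- the reciprocal transformation `dx = ℋ₀dy + 𝒩dτ`, `dt = dτ`, generated by
the averaged Casimir `ℋ₀` of the second KdV Poisson bracket, maps solutions of the
modulation equations of the first negative KdV flow (velocities `v^i`) to solutions of the
Camassa–Holm modulation equations (velocities `C̃^i`) in the coordinates `β^i = 1/(u^i+ν)`. -/
theorem stmt_18 (ν : ℝ)
    (J0 J1 Jm1 a0 a1 v1 v2 v3 H0 N Ct1 Ct2 Ct3 : ℝ → ℝ → ℝ → ℝ)
    (hJ0 : ∀ b1 b2 b3, J0 b1 b2 b3 =
      2 * ∫ l in b2..b1, 1 / Real.sqrt ((b1 - l) * (l - b2) * (l - b3)))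
    (hJ1 : ∀ b1 b2 b3, J1 b1 b2 b3 =
      2 * ∫ l in b2..b1, l / Real.sqrt ((b1 - l) * (l - b2) * (l - b3)))
    (hJm1 : ∀ b1 b2 b3, Jm1 b1 b2 b3 =
      2 * ∫ l in b2..b1, 1 / (l * Real.sqrt ((b1 - l) * (l - b2) * (l - b3))))
    (ha1 : ∀ b1 b2 b3, a1 b1 b2 b3 = -(J1 b1 b2 b3) / J0 b1 b2 b3)
    (ha0 : ∀ b1 b2 b3, a0 b1 b2 b3 = -(Jm1 b1 b2 b3) / J0 b1 b2 b3)
    (hv1 : ∀ b1 b2 b3, v1 b1 b2 b3 = (2 / Real.sqrt (b1 * b2 * b3))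
      * (1 - (b1 - b2) * (b1 - b3) / (b1 * (b1 + a1 b1 b2 b3))))
    (hv2 : ∀ b1 b2 b3, v2 b1 b2 b3 = (2 / Real.sqrt (b1 * b2 * b3))
      * (1 - (b2 - b1) * (b2 - b3) / (b2 * (b2 + a1 b1 b2 b3))))
    (hv3 : ∀ b1 b2 b3, v3 b1 b2 b3 = (2 / Real.sqrt (b1 * b2 * b3))
      * (1 - (b3 - b1) * (b3 - b2) / (b3 * (b3 + a1 b1 b2 b3))))
    (hH0 : ∀ b1 b2 b3, H0 b1 b2 b3 = -Real.sqrt (b1 * b2 * b3) * a0 b1 b2 b3)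
    (hN : ∀ b1 b2 b3, N b1 b2 b3 = 1 / b1 + 1 / b2 + 1 / b3 - ν + 2 * a0 b1 b2 b3)
    (hCt1 : ∀ b1 b2 b3, Ct1 b1 b2 b3 = 1 / b1 + 1 / b2 + 1 / b3 - ν
      + 2 * a0 b1 b2 b3 * ((b1 - b2) * (b1 - b3)) / (b1 * (b1 + a1 b1 b2 b3)))
    (hCt2 : ∀ b1 b2 b3, Ct2 b1 b2 b3 = 1 / b1 + 1 / b2 + 1 / b3 - ν
      + 2 * a0 b1 b2 b3 * ((b2 - b1) * (b2 - b3)) / (b2 * (b2 + a1 b1 b2 b3)))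
    (hCt3 : ∀ b1 b2 b3, Ct3 b1 b2 b3 = 1 / b1 + 1 / b2 + 1 / b3 - ν
      + 2 * a0 b1 b2 b3 * ((b3 - b1) * (b3 - b2)) / (b3 * (b3 + a1 b1 b2 b3)))
    (B1 B2 B3 : ℝ → ℝ → ℝ)
    (hB1 : ContDiff ℝ 1 (fun p : ℝ × ℝ => B1 p.1 p.2))
    (hB2 : ContDiff ℝ 1 (fun p : ℝ × ℝ => B2 p.1 p.2))
    (hB3 : ContDiff ℝ 1 (fun p : ℝ × ℝ => B3 p.1 p.2))
    (hdom : ∀ y τ, 0 < B3 y τ ∧ B3 y τ < B2 y τ ∧ B2 y τ < B1 y τ)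
    (hw1 : ∀ y τ, deriv (fun s => B1 y s) τ
      + v1 (B1 y τ) (B2 y τ) (B3 y τ) * deriv (fun a => B1 a τ) y = 0)
    (hw2 : ∀ y τ, deriv (fun s => B2 y s) τ
      + v2 (B1 y τ) (B2 y τ) (B3 y τ) * deriv (fun a => B2 a τ) y = 0)
    (hw3 : ∀ y τ, deriv (fun s => B3 y s) τ
      + v3 (B1 y τ) (B2 y τ) (B3 y τ) * deriv (fun a => B3 a τ) y = 0)
    (x : ℝ → ℝ → ℝ)
    (hx : ContDiff ℝ 1 (fun p : ℝ × ℝ => x p.1 p.2))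
    (hxy : ∀ y τ, deriv (fun a => x a τ) y = H0 (B1 y τ) (B2 y τ) (B3 y τ))
    (hxypos : ∀ y τ, 0 < H0 (B1 y τ) (B2 y τ) (B3 y τ))
    (hxτ : ∀ y τ, deriv (fun s => x y s) τ = N (B1 y τ) (B2 y τ) (B3 y τ))
    (Bt1 Bt2 Bt3 : ℝ → ℝ → ℝ)
    (hBt1 : Differentiable ℝ (fun p : ℝ × ℝ => Bt1 p.1 p.2))
    (hBt2 : Differentiable ℝ (fun p : ℝ × ℝ => Bt2 p.1 p.2))
    (hBt3 : Differentiable ℝ (fun p : ℝ × ℝ => Bt3 p.1 p.2))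
    (hc1 : ∀ y τ, Bt1 (x y τ) τ = B1 y τ)
    (hc2 : ∀ y τ, Bt2 (x y τ) τ = B2 y τ)
    (hc3 : ∀ y τ, Bt3 (x y τ) τ = B3 y τ) :
    ∀ y τ,
      (deriv (fun s => Bt1 (x y τ) s) τ
        + Ct1 (B1 y τ) (B2 y τ) (B3 y τ) * deriv (fun a => Bt1 a τ) (x y τ) = 0)
      ∧ (deriv (fun s => Bt2 (x y τ) s) τ
        + Ct2 (B1 y τ) (B2 y τ) (B3 y τ) * deriv (fun a => Bt2 a τ) (x y τ) = 0)
      ∧ (deriv (fun s => Bt3 (x y τ) s) τ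
        + Ct3 (B1 y τ) (B2 y τ) (B3 y τ) * deriv (fun a => Bt3 a τ) (x y τ) = 0) := by
  intro y τ
  obtain ⟨h3, h32, h21⟩ := hdom y τ
  have h2 : 0 < B2 y τ := h3.trans h32
  have h1 : 0 < B1 y τ := h2.trans h21
  have hs : Real.sqrt (B1 y τ * B2 y τ * B3 y τ) ≠ 0 :=
    (Real.sqrt_pos.2 (by positivity)).ne'
  have hxd := hx.differentiable one_ne_zero
  refine ⟨reciprocal_transport B1 Bt1 x hxd hBt1 hc1 y τ _ _ _ _ (hw1 y τ) (hxy y τ) (hxτ y τ) ?_,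
    reciprocal_transport B2 Bt2 x hxd hBt2 hc2 y τ _ _ _ _ (hw2 y τ) (hxy y τ) (hxτ y τ) ?_,
    reciprocal_transport B3 Bt3 x hxd hBt3 hc3 y τ _ _ _ _ (hw3 y τ) (hxy y τ) (hxτ y τ) ?_⟩
  · rw [hCt1, hN, hv1, hH0]
    exact velocity_identity _ _ _ _ _ hs
  · rw [hCt2, hN, hv2, hH0]
    exact velocity_identity _ _ _ _ _ hs
  · rw [hCt3, hN, hv3, hH0]
    exact velocity_identity _ _ _ _ _ hs
end

section
/- Let f : ℝ → ℝ be twice continuously differentiable and define q : ℝ³ → ℝ by q(u¹,u²,u³) = (1/(2√2 π)) ∫_{−1}^{1} ∫_{−1}^{1} f( ((1+μ)(1+η)/4) u¹ + ((1+μ)(1−η)/4) u² + ((1−μ)/2) u³ ) (1−μ)^{−1/2} (1−η²)^{−1/2} dμ dη. Then q is twice continuously differentiable, solves the linear overdetermined system of Euler–Poisson–Darboux type ∂_{u^i} q − ∂_{u^j} q = 2(u^i − u^j) ∂_{u^i}∂_{u^j} q for all i ≠ j in {1,2,3}, and satisfies the boundary condition q(u,u,u) = f(u) for all u ∈ ℝ.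 -/
/-!
With `μ = 1 - 2 z²` and `e = cos θ`, the coefficients of `u¹, u², u³` become `x², y², z²`, where
`(x, y, z)` is the point of the unit sphere with height `z` and azimuth `θ / 2`, and the singular
weight becomes the constant multiple `2 √2 dθ dz` of the area form. Hence `q` is the average of
`f (x² u¹ + y² u² + z² u³)` over the sphere (`epd_change_of_variables`), and the boundary condition
is immediate.

The integrand is now as regular in `u` as `f`, uniformly on a compact parameter domain, so one may
differentiate under the integral sign (`hasFDerivAt_epdInt`). Each partial derivative multiplies
the integrand by the matching square and replaces `f` by `f'`, which gives the `C²` regularity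
(`contDiff_epdInt`) and turns the equation for, say, `u¹` and `u²` into the statement that
`(x² - y²) f' - 2 (u¹ - u²) x² y² f''` has mean zero. This function is the derivative of `x y f'`
along the rotation field `x ∂_y - y ∂_x`, and rotations preserve area. The three such identities
`epdInt_xy`, `epdInt_xz` and `epdInt_yz` are proved by writing the rotation derivative as a
divergence in the coordinates `(θ, z)` with vanishing boundary flux.
-/

open Real Set Filter Topology MeasureTheory

/-- The weight `x²` of `u¹`, where `(x, y, z)` is the point of the unit sphere with height `z` and
azimuth `θ / 2`. -/
noncomputable def epdX (θ z : ℝ) : ℝ := (1 - z ^ 2) * (1 + cos θ) / 2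

/-- The weight `y²` of `u²`, in the same coordinates as `epdX`. -/
noncomputable def epdY (θ z : ℝ) : ℝ := (1 - z ^ 2) * (1 - cos θ) / 2

/-- The argument `x² u¹ + y² u² + z² u³` of `f`, as a function of `p = (u¹, u², u³)` and of the
coordinates `(θ, z)` on the sphere. -/
noncomputable def epdArg (p : ℝ × ℝ × ℝ) (θ z : ℝ) : ℝ :=
  epdX θ z * p.1 + epdY θ z * p.2.1 + z ^ 2 * p.2.2

/-- The spherical integral of `k · g (x² u¹ + y² u² + z² u³)` over `0 ≤ θ ≤ π`, `0 ≤ z ≤ 1`.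
The additional weight `k` makes this family of integrals closed under differentiation in `p`. -/
noncomputable def epdInt (k : ℝ → ℝ → ℝ) (g : ℝ → ℝ) (p : ℝ × ℝ × ℝ) : ℝ :=
  ∫ θ in (0:ℝ)..π, ∫ z in (0:ℝ)..1, k θ z * g (epdArg p θ z)

/-! ### Differentiation under the integral sign -/

theorem hasFDerivAt_intervalIntegral_of_continuous {H E : Type*}
    [NormedAddCommGroup H] [NormedSpace ℝ H] [ProperSpace H]
    [NormedAddCommGroup E] [NormedSpace ℝ E]
    {F : H → ℝ → E} {F' : H → ℝ → H →L[ℝ] E} (a b : ℝ)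
    (hF : Continuous (fun x : H × ℝ => F x.1 x.2))
    (hF' : Continuous (fun x : H × ℝ => F' x.1 x.2))
    (hd : ∀ p t, HasFDerivAt (fun p => F p t) (F' p t) p) (p : H) :
    HasFDerivAt (fun p => ∫ t in a..b, F p t) (∫ t in a..b, F' p t) p := by
  obtain ⟨C, hC⟩ := ((isCompact_closedBall p 1).prod (isCompact_uIcc (a := a) (b := b)))
    |>.exists_bound_of_continuousOn hF'.continuousOn
  have hF1 : ∀ x, Continuous (F x) := fun x => hF.comp (by fun_prop : Continuous fun t => (x, t))
  have hF2 : Continuous (F' p) := hF'.comp (by fun_prop : Continuous fun t => (p, t))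
  refine intervalIntegral.hasFDerivAt_integral_of_dominated_of_fderiv_le (bound := fun _ => C)
    (Metric.closedBall_mem_nhds p one_pos) (Eventually.of_forall fun x => ?_) ?_ ?_ ?_ ?_ ?_
  · exact (hF1 x).aestronglyMeasurable
  · exact (hF1 p).intervalIntegrable _ _
  · exact hF2.aestronglyMeasurable
  · exact Eventually.of_forall fun t ht x hx => hC (x, t) ⟨hx, uIoc_subset_uIcc ht⟩
  · exact intervalIntegrable_const
  · exact Eventually.of_forall fun t _ x _ => hd x t

theorem continuous_epdX : Continuous (fun x : ℝ × ℝ => epdX x.1 x.2) := by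
  unfold epdX; fun_prop

theorem continuous_epdY : Continuous (fun x : ℝ × ℝ => epdY x.1 x.2) := by
  unfold epdY; fun_prop

theorem continuous_epdArg :
    Continuous (fun x : (ℝ × ℝ × ℝ) × ℝ × ℝ => epdArg x.1 x.2.1 x.2.2) := by
  unfold epdArg epdX epdY; fun_prop

theorem continuous_epdIntegrand {k : ℝ → ℝ → ℝ} {g : ℝ → ℝ}
    (hk : Continuous (fun x : ℝ × ℝ => k x.1 x.2)) (hg : Continuous g) :
    Continuous (fun x : (ℝ × ℝ × ℝ) × ℝ × ℝ => k x.2.1 x.2.2 * g (epdArg x.1 x.2.1 x.2.2)) :=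
  (hk.comp continuous_snd).mul (hg.comp continuous_epdArg)

theorem continuous_integral_param {X E : Type*} [TopologicalSpace X] [FirstCountableTopology X]
    [LocallyCompactSpace X] [NormedAddCommGroup E] [NormedSpace ℝ E] (a b : ℝ)
    {G : X → ℝ → ℝ → E} (hG : Continuous (fun x : X × ℝ × ℝ => G x.1 x.2.1 x.2.2)) :
    Continuous (fun x : X × ℝ => ∫ z in a..b, G x.1 x.2 z) :=
  intervalIntegral.continuous_parametric_intervalIntegral_of_continuous'
    (f := fun x : X × ℝ => G x.1 x.2)
    (hG.comp (by fun_prop : Continuous fun y : (X × ℝ) × ℝ => (y.1.1, y.1.2, y.2))) a b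

theorem continuous_epdInt {k : ℝ → ℝ → ℝ} {g : ℝ → ℝ}
    (hk : Continuous (fun x : ℝ × ℝ => k x.1 x.2)) (hg : Continuous g) :
    Continuous (epdInt k g) :=
  intervalIntegral.continuous_parametric_intervalIntegral_of_continuous'
    (f := fun p θ => ∫ z in (0:ℝ)..1, k θ z * g (epdArg p θ z))
    (continuous_integral_param 0 1 (G := fun p θ z => k θ z * g (epdArg p θ z))
      (continuous_epdIntegrand hk hg)) _ _

theorem double_integral_add {E : Type*} [NormedAddCommGroup E] [NormedSpace ℝ E]
    {F G : ℝ → ℝ → E} (a b c d : ℝ)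
    (hF : Continuous (fun x : ℝ × ℝ => F x.1 x.2)) (hG : Continuous (fun x : ℝ × ℝ => G x.1 x.2)) :
    ∫ s in a..b, ∫ t in c..d, (F s t + G s t)
      = (∫ s in a..b, ∫ t in c..d, F s t) + ∫ s in a..b, ∫ t in c..d, G s t := by
  rw [← intervalIntegral.integral_add]
  · congr 1; ext s
    exact intervalIntegral.integral_add
      ((hF.comp (by fun_prop : Continuous fun t => (s, t))).intervalIntegrable _ _)
      ((hG.comp (by fun_prop : Continuous fun t => (s, t))).intervalIntegrable _ _)
  · exact (intervalIntegral.continuous_parametric_intervalIntegral_of_continuous' hF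
      c d).intervalIntegrable _ _
  · exact (intervalIntegral.continuous_parametric_intervalIntegral_of_continuous' hG
      c d).intervalIntegrable _ _

/-- Differentiation in `p` replaces `g` by `g'` and multiplies the weight by `x²`, `y²` or `z²`. -/
theorem hasFDerivAt_epdInt {k : ℝ → ℝ → ℝ} {g g' : ℝ → ℝ}
    (hk : Continuous (fun x : ℝ × ℝ => k x.1 x.2)) (hg : ∀ t, HasDerivAt g (g' t) t)
    (hg' : Continuous g') (p : ℝ × ℝ × ℝ) :
    HasFDerivAt (epdInt k g)
      (epdInt (fun θ z => k θ z * epdX θ z) g' p • ContinuousLinearMap.fst ℝ ℝ (ℝ × ℝ)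
        + epdInt (fun θ z => k θ z * epdY θ z) g' p •
          (ContinuousLinearMap.fst ℝ ℝ ℝ ∘L ContinuousLinearMap.snd ℝ ℝ (ℝ × ℝ))
        + epdInt (fun θ z => k θ z * z ^ 2) g' p •
          (ContinuousLinearMap.snd ℝ ℝ ℝ ∘L ContinuousLinearMap.snd ℝ ℝ (ℝ × ℝ))) p := by
  have hgc : Continuous g := continuous_iff_continuousAt.2 fun t => (hg t).continuousAt
  have hX := hk.mul continuous_epdX
  have hY := hk.mul continuous_epdY
  have hZ : Continuous (fun x : ℝ × ℝ => k x.1 x.2 * x.2 ^ 2) := hk.mul (by fun_prop)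
  set G' : ℝ × ℝ × ℝ → ℝ → ℝ → (ℝ × ℝ × ℝ →L[ℝ] ℝ) := fun p θ z =>
    (k θ z * epdX θ z * g' (epdArg p θ z)) • ContinuousLinearMap.fst ℝ ℝ (ℝ × ℝ)
      + (k θ z * epdY θ z * g' (epdArg p θ z)) •
          (ContinuousLinearMap.fst ℝ ℝ ℝ ∘L ContinuousLinearMap.snd ℝ ℝ (ℝ × ℝ))
      + (k θ z * z ^ 2 * g' (epdArg p θ z)) •
          (ContinuousLinearMap.snd ℝ ℝ ℝ ∘L ContinuousLinearMap.snd ℝ ℝ (ℝ × ℝ)) with hG'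
  have cX := (continuous_epdIntegrand (k := fun θ z => k θ z * epdX θ z) hX hg').smul
    (continuous_const (y := ContinuousLinearMap.fst ℝ ℝ (ℝ × ℝ)))
  have cY := (continuous_epdIntegrand (k := fun θ z => k θ z * epdY θ z) hY hg').smul
    (continuous_const
      (y := ContinuousLinearMap.fst ℝ ℝ ℝ ∘L ContinuousLinearMap.snd ℝ ℝ (ℝ × ℝ)))
  have cZ := (continuous_epdIntegrand (k := fun θ z => k θ z * z ^ 2) hZ hg').smul
    (continuous_const
      (y := ContinuousLinearMap.snd ℝ ℝ ℝ ∘L ContinuousLinearMap.snd ℝ ℝ (ℝ × ℝ)))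
  have cG' : Continuous (fun x : (ℝ × ℝ × ℝ) × ℝ × ℝ => G' x.1 x.2.1 x.2.2) :=
    (cX.add cY).add cZ
  have cG := continuous_epdIntegrand hk hgc
  have key : HasFDerivAt (epdInt k g) (∫ θ in (0:ℝ)..π, ∫ z in (0:ℝ)..1, G' p θ z) p := by
    refine hasFDerivAt_intervalIntegral_of_continuous
      (F := fun p θ => ∫ z in (0:ℝ)..1, k θ z * g (epdArg p θ z))
      (F' := fun p θ => ∫ z in (0:ℝ)..1, G' p θ z) 0 π
      (continuous_integral_param 0 1 (G := fun p θ z => k θ z * g (epdArg p θ z)) cG)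
      (continuous_integral_param 0 1 cG') (fun p θ => ?_) p
    refine hasFDerivAt_intervalIntegral_of_continuous
      (F := fun p z => k θ z * g (epdArg p θ z)) (F' := fun p z => G' p θ z) 0 1
      (cG.comp (by fun_prop : Continuous fun x : (ℝ × ℝ × ℝ) × ℝ => (x.1, θ, x.2)))
      (cG'.comp (by fun_prop : Continuous fun x : (ℝ × ℝ × ℝ) × ℝ => (x.1, θ, x.2)))
      (fun p z => ?_) p
    have hlin : HasFDerivAt (fun p => epdArg p θ z)
        (epdX θ z • ContinuousLinearMap.fst ℝ ℝ (ℝ × ℝ)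
          + epdY θ z • (ContinuousLinearMap.fst ℝ ℝ ℝ ∘L ContinuousLinearMap.snd ℝ ℝ (ℝ × ℝ))
          + z ^ 2 • (ContinuousLinearMap.snd ℝ ℝ ℝ ∘L ContinuousLinearMap.snd ℝ ℝ (ℝ × ℝ))) p := by
      refine (ContinuousLinearMap.hasFDerivAt _).congr_of_eventuallyEq
        (Eventually.of_forall fun p => ?_)
      simp [epdArg]
    refine (((hg _).comp_hasFDerivAt p hlin).const_mul (k θ z)).congr_fderiv ?_
    ext <;> simp [hG'] <;> ring
  refine key.congr_fderiv ?_
  have sec : Continuous (fun x : ℝ × ℝ => (p, x.1, x.2)) := by fun_prop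
  have e1 := double_integral_add 0 π 0 1
    (F := fun θ z =>
      (k θ z * epdX θ z * g' (epdArg p θ z)) • ContinuousLinearMap.fst ℝ ℝ (ℝ × ℝ)
      + (k θ z * epdY θ z * g' (epdArg p θ z)) •
          (ContinuousLinearMap.fst ℝ ℝ ℝ ∘L ContinuousLinearMap.snd ℝ ℝ (ℝ × ℝ)))
    (G := fun θ z => (k θ z * z ^ 2 * g' (epdArg p θ z)) •
      (ContinuousLinearMap.snd ℝ ℝ ℝ ∘L ContinuousLinearMap.snd ℝ ℝ (ℝ × ℝ)))
    ((cX.add cY).comp sec) (cZ.comp sec)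
  have e2 := double_integral_add 0 π 0 1
    (F := fun θ z =>
      (k θ z * epdX θ z * g' (epdArg p θ z)) • ContinuousLinearMap.fst ℝ ℝ (ℝ × ℝ))
    (G := fun θ z => (k θ z * epdY θ z * g' (epdArg p θ z)) •
      (ContinuousLinearMap.fst ℝ ℝ ℝ ∘L ContinuousLinearMap.snd ℝ ℝ (ℝ × ℝ)))
    (cX.comp sec) (cY.comp sec)
  refine (e1.trans (congrArg (· + _) e2)).trans ?_
  simp only [epdInt, intervalIntegral.integral_smul_const]

theorem contDiff_epdInt (n : ℕ) : ∀ (k : ℝ → ℝ → ℝ) (g : ℝ → ℝ),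
    Continuous (fun x : ℝ × ℝ => k x.1 x.2) → ContDiff ℝ n g → ContDiff ℝ n (epdInt k g) := by
  induction n with
  | zero =>
    intro k g hk hg
    simp only [Nat.cast_zero, contDiff_zero] at hg ⊢
    exact continuous_epdInt hk hg
  | succ n ih =>
    intro k g hk hg
    push_cast at hg ⊢
    have hg2 := contDiff_succ_iff_deriv.1 hg
    refine contDiff_succ_iff_hasFDerivAt.2 ⟨_, ?_, fun p => hasFDerivAt_epdInt hk
      (fun t => (hg2.1 t).hasDerivAt) hg2.2.2.continuous p⟩
    exact (((ih _ _ (hk.mul continuous_epdX) hg2.2.2).smul contDiff_const).add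
      ((ih _ _ (hk.mul continuous_epdY) hg2.2.2).smul contDiff_const)).add
      ((ih (fun θ z => k θ z * z ^ 2) _ (hk.mul (by fun_prop)) hg2.2.2).smul contDiff_const)

section Partial

variable {k : ℝ → ℝ → ℝ} {g g' : ℝ → ℝ}

theorem hasDerivAt_epdInt_fst (hk : Continuous (fun x : ℝ × ℝ => k x.1 x.2))
    (hg : ∀ t, HasDerivAt g (g' t) t) (hg' : Continuous g') (a b c : ℝ) :
    HasDerivAt (fun s => epdInt k g (s, b, c))
      (epdInt (fun θ z => k θ z * epdX θ z) g' (a, b, c)) a := by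
  have h : HasDerivAt (fun s : ℝ => (s, b, c)) ((1 : ℝ), (0 : ℝ), (0 : ℝ)) a :=
    (hasDerivAt_id a).prodMk ((hasDerivAt_const a b).prodMk (hasDerivAt_const a c))
  refine ((hasFDerivAt_epdInt hk hg hg' (a, b, c)).comp_hasDerivAt a h).congr_deriv ?_
  simp

theorem hasDerivAt_epdInt_snd (hk : Continuous (fun x : ℝ × ℝ => k x.1 x.2))
    (hg : ∀ t, HasDerivAt g (g' t) t) (hg' : Continuous g') (a b c : ℝ) :
    HasDerivAt (fun s => epdInt k g (a, s, c))
      (epdInt (fun θ z => k θ z * epdY θ z) g' (a, b, c)) b := by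
  have h : HasDerivAt (fun s : ℝ => (a, s, c)) ((0 : ℝ), (1 : ℝ), (0 : ℝ)) b :=
    (hasDerivAt_const b a).prodMk ((hasDerivAt_id b).prodMk (hasDerivAt_const b c))
  refine ((hasFDerivAt_epdInt hk hg hg' (a, b, c)).comp_hasDerivAt b h).congr_deriv ?_
  simp

theorem hasDerivAt_epdInt_trd (hk : Continuous (fun x : ℝ × ℝ => k x.1 x.2))
    (hg : ∀ t, HasDerivAt g (g' t) t) (hg' : Continuous g') (a b c : ℝ) :
    HasDerivAt (fun s => epdInt k g (a, b, s))
      (epdInt (fun θ z => k θ z * z ^ 2) g' (a, b, c)) c := by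
  have h : HasDerivAt (fun s : ℝ => (a, b, s)) ((0 : ℝ), (0 : ℝ), (1 : ℝ)) c :=
    (hasDerivAt_const c a).prodMk ((hasDerivAt_const c b).prodMk (hasDerivAt_id c))
  refine ((hasFDerivAt_epdInt hk hg hg' (a, b, c)).comp_hasDerivAt c h).congr_deriv ?_
  simp

end Partial

/-! ### Change of variables -/

/-- The substitution `μ = 1 - 2 z²`. -/
theorem integral_div_sqrt_one_sub (g : ℝ → ℝ) :
    ∫ μ in (-1:ℝ)..1, g μ / √(1 - μ) = 2 * √2 * ∫ z in (0:ℝ)..1, g (1 - 2 * z ^ 2) := by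
  have himg : Set.image (fun z : ℝ => 1 - 2 * z ^ 2) (Ioo 0 1) = Ioo (-1) 1 := by
    ext y
    constructor
    · rintro ⟨z, ⟨h0, h1⟩, rfl⟩
      constructor <;> nlinarith
    · rintro ⟨h0, h1⟩
      refine ⟨√((1 - y) / 2), ⟨Real.sqrt_pos.2 (by linarith), ?_⟩, ?_⟩
      · rw [Real.sqrt_lt' one_pos]; linarith
      · simp only
        rw [Real.sq_sqrt (by linarith)]; ring
  have hinj : InjOn (fun z : ℝ => 1 - 2 * z ^ 2) (Ioo 0 1) := by
    intro x hx y hy h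
    have h' : x ^ 2 = y ^ 2 := by simp only at h; linarith
    exact (pow_left_inj₀ hx.1.le hy.1.le two_ne_zero).1 h'
  have hder : ∀ z ∈ Ioo (0:ℝ) 1,
      HasDerivWithinAt (fun z : ℝ => 1 - 2 * z ^ 2) (-(4 * z)) (Ioo 0 1) z := by
    intro z _
    have := (((hasDerivAt_id z).pow 2).const_mul 2).const_sub 1
    refine (this.congr_deriv ?_).hasDerivWithinAt
    simp; ring
  rw [intervalIntegral.integral_of_le (by norm_num), integral_Ioc_eq_integral_Ioo, ← himg,
    integral_image_eq_integral_abs_deriv_smul measurableSet_Ioo hder hinj,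
    intervalIntegral.integral_of_le zero_le_one, integral_Ioc_eq_integral_Ioo,
    ← integral_const_mul]
  refine setIntegral_congr_fun measurableSet_Ioo fun z hz => ?_
  have hz0 : 0 < z := hz.1
  have h2 : √(1 - (1 - 2 * z ^ 2)) = √2 * z := by
    rw [show 1 - (1 - 2 * z ^ 2) = 2 * z ^ 2 by ring, Real.sqrt_mul zero_le_two,
      Real.sqrt_sq hz0.le]
  have h3 : √2 * √2 = 2 := Real.mul_self_sqrt zero_le_two
  have h4 : √2 ≠ 0 := by positivity
  simp only [smul_eq_mul, abs_neg]
  rw [h2, abs_of_pos (by linarith)]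
  generalize g (1 - 2 * z ^ 2) = y
  field_simp
  linear_combination (-2) * y * h3

/-- The substitution `e = cos θ`. -/
theorem integral_div_sqrt_one_sub_sq (g : ℝ → ℝ) :
    ∫ e in (-1:ℝ)..1, g e / √(1 - e ^ 2) = ∫ θ in (0:ℝ)..π, g (cos θ) := by
  have himg : Set.image cos (Ioo 0 π) = Ioo (-1) 1 := by
    ext y
    constructor
    · rintro ⟨t, ⟨h0, h1⟩, rfl⟩
      have hs := sin_pos_of_pos_of_lt_pi h0 h1
      have := sin_sq_add_cos_sq t
      constructor <;> nlinarith
    · rintro ⟨h0, h1⟩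
      exact ⟨arccos y, ⟨arccos_pos.2 h1, arccos_lt_pi.2 h0⟩, cos_arccos h0.le h1.le⟩
  have hinj : InjOn cos (Ioo 0 π) := injOn_cos.mono Ioo_subset_Icc_self
  rw [intervalIntegral.integral_of_le (by norm_num), integral_Ioc_eq_integral_Ioo, ← himg,
    integral_image_eq_integral_abs_deriv_smul measurableSet_Ioo
      (fun t _ => (hasDerivAt_cos t).hasDerivWithinAt) hinj,
    intervalIntegral.integral_of_le pi_pos.le, integral_Ioc_eq_integral_Ioo]
  refine setIntegral_congr_fun measurableSet_Ioo fun t ht => ?_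
  have hs := sin_pos_of_pos_of_lt_pi ht.1 ht.2
  have h2 : √(1 - cos t ^ 2) = sin t := by
    rw [← sin_sq, Real.sqrt_sq hs.le]
  simp only [smul_eq_mul, abs_neg]
  rw [h2, abs_of_pos hs]
  field_simp

/-- The double integral of the theorem is an average over the sphere: both endpoint singularities
disappear in the coordinates `(θ, z)`. -/
theorem epd_change_of_variables (f : ℝ → ℝ) (a b c : ℝ) :
    (1 / (2 * √2 * π)) *
        ∫ e in (-1:ℝ)..1, ∫ μ in (-1:ℝ)..1,
          f ((1 + μ) * (1 + e) / 4 * a + (1 + μ) * (1 - e) / 4 * b + (1 - μ) / 2 * c)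
            / (√(1 - μ) * √(1 - e ^ 2))
      = (1 / π) * epdInt (fun _ _ => 1) f (a, b, c) := by
  simp_rw [← div_div, intervalIntegral.integral_div]
  rw [integral_div_sqrt_one_sub_sq (fun e => ∫ μ in (-1:ℝ)..1,
    f ((1 + μ) * (1 + e) / 4 * a + (1 + μ) * (1 - e) / 4 * b + (1 - μ) / 2 * c) / √(1 - μ))]
  have h : ∀ θ : ℝ, ∫ μ in (-1:ℝ)..1, f ((1 + μ) * (1 + cos θ) / 4 * a
      + (1 + μ) * (1 - cos θ) / 4 * b + (1 - μ) / 2 * c) / √(1 - μ)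
      = 2 * √2 * ∫ z in (0:ℝ)..1, 1 * f (epdArg (a, b, c) θ z) := by
    intro θ
    rw [integral_div_sqrt_one_sub (fun μ => f ((1 + μ) * (1 + cos θ) / 4 * a
      + (1 + μ) * (1 - cos θ) / 4 * b + (1 - μ) / 2 * c))]
    congr 2
    ext z
    rw [one_mul]
    congr 1
    simp only [epdArg, epdX, epdY]
    ring
  rw [epdInt]
  simp_rw [h]
  rw [intervalIntegral.integral_const_mul]
  have : √2 ≠ 0 := by positivity
  have := pi_ne_zero
  field_simp

/-! ### Integration by parts on the sphere -/

/-- A divergence `∂A/∂z + ∂B/∂θ` integrates to zero over `[0, π] × [0, 1]` when the flux through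
the boundary vanishes. -/
theorem integral_divergence_eq_zero {A A' B B' : ℝ → ℝ → ℝ}
    (hA : ∀ θ z, HasDerivAt (fun z => A θ z) (A' θ z) z)
    (hB : ∀ θ z, HasDerivAt (fun θ => B θ z) (B' θ z) θ)
    (cA : Continuous (fun x : ℝ × ℝ => A' x.1 x.2)) (cB : Continuous (fun x : ℝ × ℝ => B' x.1 x.2))
    (hA0 : ∀ θ, A θ 0 = 0) (hA1 : ∀ θ, A θ 1 = 0) (hB0 : ∀ z, B 0 z = 0) (hB1 : ∀ z, B π z = 0) :
    ∫ θ in (0:ℝ)..π, ∫ z in (0:ℝ)..1, (A' θ z + B' θ z) = 0 := by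
  rw [double_integral_add 0 π 0 1 cA cB]
  have h1 : ∀ θ, ∫ z in (0:ℝ)..1, A' θ z = 0 := fun θ => by
    rw [intervalIntegral.integral_eq_sub_of_hasDerivAt (fun z _ => hA θ z)
      ((cA.comp (by fun_prop : Continuous fun z => (θ, z))).intervalIntegrable _ _), hA0, hA1,
      sub_zero]
  have h2 : ∀ z, ∫ θ in (0:ℝ)..π, B' θ z = 0 := fun z => by
    rw [intervalIntegral.integral_eq_sub_of_hasDerivAt (fun θ _ => hB θ z)
      ((cB.comp (by fun_prop : Continuous fun θ => (θ, z))).intervalIntegrable _ _), hB0, hB1,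
      sub_zero]
  rw [intervalIntegral_intervalIntegral_swap (F := B')]
  · simp [h1, h2]
  · have hc : IntegrableOn (Function.uncurry B') (uIcc 0 π ×ˢ uIcc 0 1) :=
      ContinuousOn.integrableOn_compact (isCompact_uIcc.prod isCompact_uIcc) cB.continuousOn
    exact hc.mono_set (prod_mono uIoc_subset_uIcc uIoc_subset_uIcc)

/-- Linearity of `epdInt`, in the form in which the integral identities below are used. -/
theorem epdInt_sub_sub_eq {k₁ k₂ k₃ : ℝ → ℝ → ℝ} {g g' : ℝ → ℝ} (r : ℝ) (p : ℝ × ℝ × ℝ)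
    (h₁ : Continuous (fun x : ℝ × ℝ => k₁ x.1 x.2)) (h₂ : Continuous (fun x : ℝ × ℝ => k₂ x.1 x.2))
    (h₃ : Continuous (fun x : ℝ × ℝ => k₃ x.1 x.2)) (hg : Continuous g) (hg' : Continuous g')
    (h : ∫ θ in (0:ℝ)..π, ∫ z in (0:ℝ)..1, ((k₁ θ z - k₂ θ z) * g (epdArg p θ z)
      - r * (k₃ θ z * g' (epdArg p θ z))) = 0) :
    epdInt k₁ g p - epdInt k₂ g p = r * epdInt k₃ g' p := by
  have sec : Continuous (fun x : ℝ × ℝ => (p, x.1, x.2)) := by fun_prop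
  have c1 := (continuous_epdIntegrand h₁ hg).comp sec
  have c2 := ((continuous_epdIntegrand h₂ hg).comp sec).const_mul (-1)
  have c3 := ((continuous_epdIntegrand h₃ hg').comp sec).const_mul (-r)
  have e1 := double_integral_add 0 π 0 1
    (F := fun θ z => k₁ θ z * g (epdArg p θ z) + -1 * (k₂ θ z * g (epdArg p θ z)))
    (G := fun θ z => -r * (k₃ θ z * g' (epdArg p θ z))) (c1.add c2) c3
  have e2 := double_integral_add 0 π 0 1
    (F := fun θ z => k₁ θ z * g (epdArg p θ z))
    (G := fun θ z => -1 * (k₂ θ z * g (epdArg p θ z))) c1 c2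
  have h' : ∫ θ in (0:ℝ)..π, ∫ z in (0:ℝ)..1, ((k₁ θ z * g (epdArg p θ z)
      + -1 * (k₂ θ z * g (epdArg p θ z))) + -r * (k₃ θ z * g' (epdArg p θ z))) = 0 := by
    rw [← h]
    congr 1; ext θ; congr 1; ext z; ring
  rw [e1, e2] at h'
  simp only [intervalIntegral.integral_const_mul] at h'
  simp only [epdInt]
  linarith

section Identities

variable {g g' : ℝ → ℝ}

theorem hasDerivAt_comp_epdArg_z (hg : ∀ t, HasDerivAt g (g' t) t) (p : ℝ × ℝ × ℝ) (θ z : ℝ) :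
    HasDerivAt (fun z => g (epdArg p θ z))
      (g' (epdArg p θ z) * (z * (2 * p.2.2 - (1 + cos θ) * p.1 - (1 - cos θ) * p.2.1))) z := by
  have hz : HasDerivAt (fun z : ℝ => z ^ 2) (2 * z) z := by simpa using hasDerivAt_pow 2 z
  have h1 := (hz.const_sub 1)
  have h2 : HasDerivAt (fun z => epdArg p θ z)
      (z * (2 * p.2.2 - (1 + cos θ) * p.1 - (1 - cos θ) * p.2.1)) z := by
    refine ((((h1.mul_const (1 + cos θ)).div_const 2).mul_const p.1).add
      (((h1.mul_const (1 - cos θ)).div_const 2).mul_const p.2.1)).add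
      (hz.mul_const p.2.2) |>.congr_deriv ?_
    ring
  exact (hg _).comp z h2

theorem hasDerivAt_comp_epdArg_θ (hg : ∀ t, HasDerivAt g (g' t) t) (p : ℝ × ℝ × ℝ) (θ z : ℝ) :
    HasDerivAt (fun θ => g (epdArg p θ z))
      (g' (epdArg p θ z) * (-((1 - z ^ 2) * sin θ / 2 * (p.1 - p.2.1)))) θ := by
  have hc := hasDerivAt_cos θ
  have h2 : HasDerivAt (fun θ => epdArg p θ z)
      (-((1 - z ^ 2) * sin θ / 2 * (p.1 - p.2.1))) θ := by
    refine (((((hc.const_add 1).const_mul (1 - z ^ 2)).div_const 2).mul_const p.1).add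
      ((((hc.const_sub 1).const_mul (1 - z ^ 2)).div_const 2).mul_const p.2.1)).add
      (hasDerivAt_const θ (z ^ 2 * p.2.2)) |>.congr_deriv ?_
    ring
  exact (hg _).comp θ h2

/-- The rotation field `x ∂_y - y ∂_x` is `2 ∂_θ`. Applied to `x y g`, where
`x y = (1 - z²) sin θ / 2`, it yields `(x² - y²) g - 2 (u¹ - u²) x² y² g'`, which therefore has
integral zero. -/
theorem epdInt_xy (hg : ∀ t, HasDerivAt g (g' t) t) (hg' : Continuous g') (p : ℝ × ℝ × ℝ) :
    epdInt epdX g p - epdInt epdY g p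
      = 2 * (p.1 - p.2.1) * epdInt (fun θ z => epdX θ z * epdY θ z) g' p := by
  have hgc : Continuous g := continuous_iff_continuousAt.2 fun t => (hg t).continuousAt
  refine epdInt_sub_sub_eq _ p continuous_epdX continuous_epdY
    (continuous_epdX.mul continuous_epdY) hgc hg' ?_
  have hcA : Continuous (fun x : ℝ × ℝ => epdArg p x.1 x.2) := by
    unfold epdArg epdX epdY; fun_prop
  have key := integral_divergence_eq_zero (A := fun _ _ => 0) (A' := fun _ _ => 0)
    (B := fun θ z => (1 - z ^ 2) * sin θ * g (epdArg p θ z))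
    (B' := fun θ z => (1 - z ^ 2) * cos θ * g (epdArg p θ z) + (1 - z ^ 2) * sin θ *
      (g' (epdArg p θ z) * (-((1 - z ^ 2) * sin θ / 2 * (p.1 - p.2.1)))))
    (fun θ z => hasDerivAt_const _ _)
    (fun θ z => ((hasDerivAt_sin θ).const_mul (1 - z ^ 2)).mul (hasDerivAt_comp_epdArg_θ hg p θ z))
    (by fun_prop) (by fun_prop) (by simp) (by simp) (by simp) (by simp)
  rw [← key]
  congr 1; ext θ; congr 1; ext z
  have hs : sin θ ^ 2 = 1 - cos θ ^ 2 := sin_sq θ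
  simp only [epdX, epdY]
  linear_combination (-(1 - z ^ 2) ^ 2 / 2 * (p.1 - p.2.1) * g' (epdArg p θ z)) * (-hs)

/-- The rotation field `x ∂_z - z ∂_x` preserves the measure `dθ dz`, so applying it to `x z g`
yields a divergence, namely `∂_z (z x² g) + ∂_θ (z² sin θ g)`. This equals
`(x² - z²) g - 2 (u¹ - u³) x² z² g'`, which therefore has integral zero. -/
theorem epdInt_xz (hg : ∀ t, HasDerivAt g (g' t) t) (hg' : Continuous g') (p : ℝ × ℝ × ℝ) :
    epdInt epdX g p - epdInt (fun _ z => z ^ 2) g p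
      = 2 * (p.1 - p.2.2) * epdInt (fun θ z => epdX θ z * z ^ 2) g' p := by
  have hgc : Continuous g := continuous_iff_continuousAt.2 fun t => (hg t).continuousAt
  refine epdInt_sub_sub_eq _ p continuous_epdX (by fun_prop)
    (continuous_epdX.mul (by fun_prop)) hgc hg' ?_
  have hcA : Continuous (fun x : ℝ × ℝ => epdArg p x.1 x.2) := by
    unfold epdArg epdX epdY; fun_prop
  have hA : ∀ θ z : ℝ, HasDerivAt (fun z : ℝ => (z - z ^ 3) * (1 + cos θ) / 2)
      ((1 - 3 * z ^ 2) * (1 + cos θ) / 2) z := fun θ z => by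
    have := ((((hasDerivAt_id z).sub (hasDerivAt_pow 3 z)).mul_const (1 + cos θ)).div_const 2)
    exact this.congr_deriv (by norm_num)
  have key := integral_divergence_eq_zero
    (A := fun θ z => (z - z ^ 3) * (1 + cos θ) / 2 * g (epdArg p θ z))
    (A' := fun θ z => (1 - 3 * z ^ 2) * (1 + cos θ) / 2 * g (epdArg p θ z)
      + (z - z ^ 3) * (1 + cos θ) / 2 * (g' (epdArg p θ z) *
        (z * (2 * p.2.2 - (1 + cos θ) * p.1 - (1 - cos θ) * p.2.1))))
    (B := fun θ z => z ^ 2 * sin θ * g (epdArg p θ z))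
    (B' := fun θ z => z ^ 2 * cos θ * g (epdArg p θ z) + z ^ 2 * sin θ *
      (g' (epdArg p θ z) * (-((1 - z ^ 2) * sin θ / 2 * (p.1 - p.2.1)))))
    (fun θ z => (hA θ z).mul (hasDerivAt_comp_epdArg_z hg p θ z))
    (fun θ z => ((hasDerivAt_sin θ).const_mul (z ^ 2)).mul (hasDerivAt_comp_epdArg_θ hg p θ z))
    (by fun_prop) (by fun_prop) (by simp) (by simp) (by simp) (by simp)
  rw [← key]
  congr 1; ext θ; congr 1; ext z
  have hs : sin θ ^ 2 = 1 - cos θ ^ 2 := sin_sq θ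
  simp only [epdX]
  linear_combination (z ^ 2 * (1 - z ^ 2) / 2 * (p.1 - p.2.1) * g' (epdArg p θ z)) * hs

/-- The analogue of `epdInt_xz` for the rotation field `y ∂_z - z ∂_y` and the function `y z g`;
the divergence is now `∂_z (z y² g) - ∂_θ (z² sin θ g)`. -/
theorem epdInt_yz (hg : ∀ t, HasDerivAt g (g' t) t) (hg' : Continuous g') (p : ℝ × ℝ × ℝ) :
    epdInt epdY g p - epdInt (fun _ z => z ^ 2) g p
      = 2 * (p.2.1 - p.2.2) * epdInt (fun θ z => epdY θ z * z ^ 2) g' p := by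
  have hgc : Continuous g := continuous_iff_continuousAt.2 fun t => (hg t).continuousAt
  refine epdInt_sub_sub_eq _ p continuous_epdY (by fun_prop)
    (continuous_epdY.mul (by fun_prop)) hgc hg' ?_
  have hcA : Continuous (fun x : ℝ × ℝ => epdArg p x.1 x.2) := by
    unfold epdArg epdX epdY; fun_prop
  have hA : ∀ θ z : ℝ, HasDerivAt (fun z : ℝ => (z - z ^ 3) * (1 - cos θ) / 2)
      ((1 - 3 * z ^ 2) * (1 - cos θ) / 2) z := fun θ z => by
    have := ((((hasDerivAt_id z).sub (hasDerivAt_pow 3 z)).mul_const (1 - cos θ)).div_const 2)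
    exact this.congr_deriv (by norm_num)
  have key := integral_divergence_eq_zero
    (A := fun θ z => (z - z ^ 3) * (1 - cos θ) / 2 * g (epdArg p θ z))
    (A' := fun θ z => (1 - 3 * z ^ 2) * (1 - cos θ) / 2 * g (epdArg p θ z)
      + (z - z ^ 3) * (1 - cos θ) / 2 * (g' (epdArg p θ z) *
        (z * (2 * p.2.2 - (1 + cos θ) * p.1 - (1 - cos θ) * p.2.1))))
    (B := fun θ z => -z ^ 2 * sin θ * g (epdArg p θ z))
    (B' := fun θ z => -z ^ 2 * cos θ * g (epdArg p θ z) + -z ^ 2 * sin θ *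
      (g' (epdArg p θ z) * (-((1 - z ^ 2) * sin θ / 2 * (p.1 - p.2.1)))))
    (fun θ z => (hA θ z).mul (hasDerivAt_comp_epdArg_z hg p θ z))
    (fun θ z => ((hasDerivAt_sin θ).const_mul (-z ^ 2)).mul (hasDerivAt_comp_epdArg_θ hg p θ z))
    (by fun_prop) (by fun_prop) (by simp) (by simp) (by simp) (by simp)
  rw [← key]
  congr 1; ext θ; congr 1; ext z
  have hs : sin θ ^ 2 = 1 - cos θ ^ 2 := sin_sq θ
  simp only [epdY]
  linear_combination (-z ^ 2 * (1 - z ^ 2) / 2 * (p.1 - p.2.1) * g' (epdArg p θ z)) * hs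

end Identities

/-- the explicit double-integral formula solves the Euler–Poisson–Darboux
system `∂_{u^i}q − ∂_{u^j}q = 2(u^i−u^j)∂_{u^i}∂_{u^j}q` (i ≠ j) with boundary condition
`q(u,u,u) = f(u)`, and `q` is twice continuously differentiable. -/
theorem stmt_19 (f : ℝ → ℝ) (hf : ContDiff ℝ 2 f)
    (q : ℝ → ℝ → ℝ → ℝ)
    (hq : ∀ a b c, q a b c =
      (1 / (2 * Real.sqrt 2 * Real.pi)) *
        ∫ e in (-1:ℝ)..1, ∫ μ in (-1:ℝ)..1,
          f ((1 + μ) * (1 + e) / 4 * a + (1 + μ) * (1 - e) / 4 * b + (1 - μ) / 2 * c)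
            / (Real.sqrt (1 - μ) * Real.sqrt (1 - e ^ 2))) :
    ContDiff ℝ 2 (fun p : ℝ × ℝ × ℝ => q p.1 p.2.1 p.2.2)
    ∧ (∀ a b c : ℝ,
        (deriv (fun s => q s b c) a - deriv (fun s => q a s c) b
          = 2 * (a - b) * deriv (fun s => deriv (fun s' => q s s' c) b) a)
        ∧ (deriv (fun s => q a s c) b - deriv (fun s => q s b c) a
          = 2 * (b - a) * deriv (fun s => deriv (fun s' => q s' s c) a) b)
        ∧ (deriv (fun s => q s b c) a - deriv (fun s => q a b s) c
          = 2 * (a - c) * deriv (fun s => deriv (fun s' => q s b s') c) a)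
        ∧ (deriv (fun s => q a b s) c - deriv (fun s => q s b c) a
          = 2 * (c - a) * deriv (fun s => deriv (fun s' => q s' b s) a) c)
        ∧ (deriv (fun s => q a s c) b - deriv (fun s => q a b s) c
          = 2 * (b - c) * deriv (fun s => deriv (fun s' => q a s s') c) b)
        ∧ (deriv (fun s => q a b s) c - deriv (fun s => q a s c) b
          = 2 * (c - b) * deriv (fun s => deriv (fun s' => q a s' s) b) c))
    ∧ (∀ u : ℝ, q u u u = f u) := by
  obtain rfl : q = fun a b c => (1 / π) * epdInt (fun _ _ => 1) f (a, b, c) := by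
    funext a b c
    rw [hq, epd_change_of_variables]
  clear hq
  have hf1 : ContDiff ℝ 1 (deriv f) := ((contDiff_succ_iff_deriv (n := 1)).1 hf).2.2
  have hd0 : ∀ t, HasDerivAt f (deriv f t) t := fun t =>
    (hf.differentiable (by norm_num) t).hasDerivAt
  have hd1 : ∀ t, HasDerivAt (deriv f) (deriv (deriv f) t) t := fun t =>
    (hf1.differentiable (by norm_num) t).hasDerivAt
  have c1 : Continuous (deriv f) := hf1.continuous
  have c2 : Continuous (deriv (deriv f)) := hf1.continuous_deriv le_rfl
  have k1 : Continuous (fun _ : ℝ × ℝ => (1 : ℝ)) := continuous_const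
  have kZ : Continuous (fun x : ℝ × ℝ => x.2 ^ 2) := by fun_prop
  have dX : ∀ a b c, deriv (fun s => (1 / π) * epdInt (fun _ _ => 1) f (s, b, c)) a
      = (1 / π) * epdInt epdX (deriv f) (a, b, c) := fun a b c => by
    simpa only [one_mul] using ((hasDerivAt_epdInt_fst (k := fun _ _ => 1) k1 hd0 c1 a b c).const_mul (1 / π)).deriv
  have dY : ∀ a b c, deriv (fun s => (1 / π) * epdInt (fun _ _ => 1) f (a, s, c)) b
      = (1 / π) * epdInt epdY (deriv f) (a, b, c) := fun a b c => by
    simpa only [one_mul] using ((hasDerivAt_epdInt_snd (k := fun _ _ => 1) k1 hd0 c1 a b c).const_mul (1 / π)).deriv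
  have dZ : ∀ a b c, deriv (fun s => (1 / π) * epdInt (fun _ _ => 1) f (a, b, s)) c
      = (1 / π) * epdInt (fun _ z => z ^ 2) (deriv f) (a, b, c) := fun a b c => by
    simpa only [one_mul] using ((hasDerivAt_epdInt_trd (k := fun _ _ => 1) k1 hd0 c1 a b c).const_mul (1 / π)).deriv
  have iXY := epdInt_xy hd1 c2
  have iXZ := epdInt_xz hd1 c2
  have iYZ := epdInt_yz hd1 c2
  refine ⟨?_, fun a b c => ⟨?_, ?_, ?_, ?_, ?_, ?_⟩, fun u => ?_⟩
  · exact contDiff_const.mul (contDiff_epdInt 2 _ _ k1 hf)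
  · simp only [dX, dY]
    rw [((hasDerivAt_epdInt_fst continuous_epdY hd1 c2 a b c).const_mul (1 / π)).deriv]
    have := iXY (a, b, c)
    simp only [mul_comm (epdY _ _)]
    linear_combination (1 / π) * this
  · simp only [dX, dY]
    rw [((hasDerivAt_epdInt_snd continuous_epdX hd1 c2 a b c).const_mul (1 / π)).deriv]
    have := iXY (a, b, c)
    linear_combination (-1 / π) * this
  · simp only [dX, dZ]
    rw [((hasDerivAt_epdInt_fst (k := fun _ z => z ^ 2) kZ hd1 c2 a b c).const_mul (1 / π)).deriv]
    have := iXZ (a, b, c)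
    simp only [mul_comm (_ ^ 2) (epdX _ _)]
    linear_combination (1 / π) * this
  · simp only [dX, dZ]
    rw [((hasDerivAt_epdInt_trd continuous_epdX hd1 c2 a b c).const_mul (1 / π)).deriv]
    have := iXZ (a, b, c)
    linear_combination (-1 / π) * this
  · simp only [dY, dZ]
    rw [((hasDerivAt_epdInt_snd (k := fun _ z => z ^ 2) kZ hd1 c2 a b c).const_mul (1 / π)).deriv]
    have := iYZ (a, b, c)
    simp only [mul_comm (_ ^ 2) (epdY _ _)]
    linear_combination (1 / π) * this
  · simp only [dY, dZ]
    rw [((hasDerivAt_epdInt_trd continuous_epdY hd1 c2 a b c).const_mul (1 / π)).deriv]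
    have := iYZ (a, b, c)
    linear_combination (-1 / π) * this
  · have h : ∀ θ z, epdArg (u, u, u) θ z = u := fun θ z => by
      simp only [epdArg, epdX, epdY]; ring
    simp only [epdInt, h]
    have := pi_ne_zero
    simp
end
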